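/- arXiv:2009.11897 — 6 statements merged into one kernel-verified Lean document; each statement's English description precedes it below -/
import Mathlib

section
/- r_6(ℤ_6^2) = 25, i.e., the maximal size of a subset of (ℤ/6ℤ)^2 containing no 6-term arithmetic progression of pairwise distinct elements is exactly 25. -/
/-- `A` contains a `k`-term arithmetic progression `a, a+d, …, a+(k-1)d`
whose terms are pairwise distinct. -/
def IsDistinctAP {G : Type*} [AddCommGroup G] (k : ℕ) (A : Set G) : Prop :=
  ∃ a d : G, (∀ i : Fin k, a + (i : ℕ) • d ∈ A) ∧
    Function.Injective fun i : Fin k => a + (i : ℕ) • d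

/-- `rAP k m n` is the largest cardinality of a subset of `(ℤ/mℤ)^n` containing
no `k`-term arithmetic progression of pairwise distinct elements. -/
noncomputable def rAP (k m n : ℕ) : ℕ :=
  sSup {s : ℕ | ∃ A : Finset (Fin n → ZMod m),
    ¬ IsDistinctAP k (A : Set (Fin n → ZMod m)) ∧ A.card = s}

/-!
For an odd prime `p`, the Chinese remainder theorem splits `(ℤ/2pℤ)²` as `U × V` with `U = 𝔽₂²` and
`V = 𝔽ₚ²`, and a `2p`-term progression of distinct elements is exactly a product `{u, u'} × ℓ` with
`u ≠ u'` in `U` and `ℓ` an affine line of `V`. So a set is progression-free iff the slices `B u ⊆ V`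
of its complement have the property that every union `B u ∪ B u'` with `u ≠ u'` meets every line.

Lower bound for the complement: by Jamison's theorem a set meeting every line of `𝔽ₚ²` has at least
`2p - 1` points, so `|B u| + |B u'| ≥ 2p - 1` whenever `u ≠ u'`, and the four slices contain at
least `4p - 1` points altogether. This is attained by taking four distinct lines through the origin
as slices and removing the origin from one of them: two concurrent lines meet every line. Hence
`r_{2p}(ℤ_{2p}²) = 4p² - (4p - 1) = (2p - 1)²`, which is `25` for `p = 3`.
-/

open Finset Module

open scoped LinearAlgebra.Projectivization

section Transfer

variable {G H : Type*} [AddCommGroup G] [AddCommGroup H]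

theorem isDistinctAP_preimage_addEquiv (e : G ≃+ H) {k : ℕ} {A : Set H} :
    IsDistinctAP k (e ⁻¹' A) ↔ IsDistinctAP k A := by
  have apply_term (a d : G) (i : ℕ) : e (a + i • d) = e a + i • e d := by simp
  unfold IsDistinctAP
  rw [e.surjective.exists]
  refine exists_congr fun a => ?_
  rw [e.surjective.exists]
  refine exists_congr fun d => ?_
  simp only [← apply_term, Set.mem_preimage]
  exact and_congr_right fun _ => (e.injective.of_comp_iff _).symm

theorem rAP_eq_sSup_of_addEquiv {k m n : ℕ} (e : (Fin n → ZMod m) ≃+ G) :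
    rAP k m n = sSup {s | ∃ A : Finset G, ¬ IsDistinctAP k (A : Set G) ∧ #A = s} := by
  unfold rAP
  congr 1
  ext s
  rw [Set.mem_ofPred_eq, Set.mem_ofPred_eq, (Equiv.finsetCongr e.symm.toEquiv).surjective.exists]
  refine exists_congr fun A => ?_
  have coe_eq : (Equiv.finsetCongr e.symm.toEquiv A : Set (Fin n → ZMod m)) = e ⁻¹' A := by
    ext x
    simp [AddEquiv.symm_apply_eq]
  rw [coe_eq, isDistinctAP_preimage_addEquiv, Equiv.finsetCongr_apply, card_map]

end Transfer

section BlockingSets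

/-- A blocking set for lines: a set of points of the `F`-vector space `V` that meets every affine
line `{a + t • w | t : F}`, `w ≠ 0`. -/
def MeetsEveryLine (F : Type*) {V : Type*} [Field F] [AddCommGroup V] [Module F V] (B : Set V) :
    Prop :=
  ∀ a w : V, w ≠ 0 → ∃ t : F, a + t • w ∈ B

variable {F : Type*} [Field F]

theorem exists_dotProduct_eq {σ : Type*} [Fintype σ] {x : σ → F} (hx : x ≠ 0) (c : F) :
    ∃ a : σ → F, x ⬝ᵥ a = c := by
  classical
  obtain ⟨i, hi⟩ := Function.ne_iff.mp hx
  exact ⟨Pi.single i (c / x i), by rw [dotProduct_single, mul_div_cancel₀ _ hi]⟩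

theorem pred_card_mul_card_le_totalDegree {σ : Type*} [Fintype σ] [Fintype F]
    {P : MvPolynomial σ F} (eval_zero : P.eval 0 ≠ 0)
    (eval_ne_zero : ∀ x ≠ 0, P.eval x = 0) :
    (Fintype.card F - 1) * Fintype.card σ ≤ P.totalDegree := by
  classical
  by_contra! degree_lt
  apply eval_zero
  rw [← Fintype.sum_eq_single 0 eval_ne_zero, P.sum_eval_eq_zero degree_lt]

/-- **Jamison's theorem.** After translating a point `b₀ ∈ B` to the origin, the product of
`1 - x ⬝ᵥ (b - b₀)` over the other points `b` vanishes in `x` exactly away from the origin. -/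
theorem pred_card_mul_card_lt_card_of_meets_hyperplanes {σ : Type*} [Fintype σ] [Nonempty σ]
    [Fintype F] {B : Finset (σ → F)} (hB : ∀ x ≠ 0, ∀ c : F, ∃ b ∈ B, x ⬝ᵥ b = c) :
    (Fintype.card F - 1) * Fintype.card σ < #B := by
  classical
  obtain ⟨x₀, hx₀⟩ := exists_ne (0 : σ → F)
  obtain ⟨b₀, hb₀, -⟩ := hB x₀ hx₀ 0
  let factor (b : σ → F) : MvPolynomial σ F :=
    1 - ∑ i, MvPolynomial.C ((b - b₀) i) * MvPolynomial.X i
  have eval_factor (x b : σ → F) : (factor b).eval x = 1 - (x ⬝ᵥ b - x ⬝ᵥ b₀) := by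
    rw [← dotProduct_sub]
    simp [factor, dotProduct, mul_comm]
  have totalDegree_factor (b : σ → F) : (factor b).totalDegree ≤ 1 := by
    refine (MvPolynomial.totalDegree_sub _ _).trans (max_le (by simp) ?_)
    refine MvPolynomial.totalDegree_finsetSum_le fun i _ => ?_
    exact (MvPolynomial.totalDegree_mul _ _).trans
      (by rw [MvPolynomial.totalDegree_C, MvPolynomial.totalDegree_X])
  have card_le : (Fintype.card F - 1) * Fintype.card σ ≤
      (∏ b ∈ B.erase b₀, factor b).totalDegree := by
    apply pred_card_mul_card_le_totalDegree
    · rw [MvPolynomial.eval_prod]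
      simp only [eval_factor, zero_dotProduct, sub_self, sub_zero, prod_const_one, ne_eq,
        one_ne_zero, not_false_eq_true]
    · intro x hx
      obtain ⟨b, hb, hxb⟩ := hB x hx (x ⬝ᵥ b₀ + 1)
      have b_ne : b ≠ b₀ := by
        rintro rfl
        simp at hxb
      rw [MvPolynomial.eval_prod]
      exact prod_eq_zero (mem_erase.mpr ⟨b_ne, hb⟩) (by rw [eval_factor, hxb]; ring)
  calc
    (Fintype.card F - 1) * Fintype.card σ ≤ ∑ b ∈ B.erase b₀, (factor b).totalDegree :=
      card_le.trans (MvPolynomial.totalDegree_finsetProd _ _)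
    _ ≤ #(B.erase b₀) := by simpa using sum_le_card_nsmul _ _ 1 fun b _ => totalDegree_factor b
    _ < #B := card_erase_lt_of_mem hb₀

theorem MeetsEveryLine.two_mul_card_le [Fintype F] {B : Finset (Fin 2 → F)}
    (hB : MeetsEveryLine F (B : Set (Fin 2 → F))) : 2 * Fintype.card F ≤ #B + 1 := by
  have meets_hyperplanes (x : Fin 2 → F) (hx : x ≠ 0) (c : F) : ∃ b ∈ B, x ⬝ᵥ b = c := by
    obtain ⟨a, ha⟩ := exists_dotProduct_eq hx c
    have direction_ne : ![-x 1, x 0] ≠ 0 := by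
      contrapose! hx
      ext i
      fin_cases i
      · simpa using congrFun hx 1
      · simpa using congrFun hx 0
    obtain ⟨t, ht⟩ := hB a _ direction_ne
    refine ⟨_, ht, ?_⟩
    rw [dotProduct_add, dotProduct_smul, ha]
    simp [dotProduct, Fin.sum_univ_two, mul_comm]
  have := pred_card_mul_card_lt_card_of_meets_hyperplanes meets_hyperplanes
  rw [Fintype.card_fin] at this
  omega

variable {V : Type*} [AddCommGroup V] [Module F V]

theorem exists_add_smul_mem_of_notMem (hV : finrank F V = 2) (D : ℙ F V) {w : V}
    (hw : w ∉ D.submodule) (a : V) : ∃ t : F, a + t • w ∈ D.submodule := by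
  have : FiniteDimensional F V := .of_finrank_eq_succ hV
  have finrank_quotient : finrank F (V ⧸ D.submodule) = 1 := by
    have := D.submodule.finrank_quotient_add_finrank
    rw [D.finrank_submodule, hV] at this
    omega
  have mk_ne : D.submodule.mkQ w ≠ 0 := by simpa using hw
  obtain ⟨t, ht⟩ :=
    (finrank_eq_one_iff_of_nonzero' _ mk_ne).mp finrank_quotient (D.submodule.mkQ (-a))
  refine ⟨t, ?_⟩
  rw [← map_smul, ← sub_eq_zero, ← map_sub, Submodule.mkQ_apply,
    Submodule.Quotient.mk_eq_zero] at ht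
  rwa [sub_neg_eq_add, add_comm] at ht

theorem eq_mk_of_mem_submodule {D : ℙ F V} {w : V} (hw : w ≠ 0) (hD : w ∈ D.submodule) :
    D = .mk F w hw := by
  induction D using Projectivization.ind with
  | h v hv =>
    rw [Projectivization.submodule_mk, Submodule.mem_span_singleton] at hD
    exact ((Projectivization.mk_eq_mk_iff' F w v hw hv).mpr hD).symm

theorem meetsEveryLine_submodule_union (hV : finrank F V = 2) {D D' : ℙ F V} (hD : D ≠ D') :
    MeetsEveryLine F (D.submodule ∪ D'.submodule : Set V) := by
  intro a w hw
  by_cases mem_D : w ∈ D.submodule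
  · have notMem_D' : w ∉ D'.submodule := fun mem_D' =>
      hD ((eq_mk_of_mem_submodule hw mem_D).trans (eq_mk_of_mem_submodule hw mem_D').symm)
    exact (exists_add_smul_mem_of_notMem hV D' notMem_D' a).imp fun _ => Or.inr
  · exact (exists_add_smul_mem_of_notMem hV D mem_D a).imp fun _ => Or.inl

end BlockingSets

section Counting

theorem card_eq_sum_card_slice {α β : Type*} [Fintype α] [Fintype β] [DecidableEq α]
    [DecidableEq β] (s : Finset (α × β)) : #s = ∑ a, #{b | (a, b) ∈ s} := by
  simp only [card_eq_sum_ones]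
  exact sum_finset_product s univ (fun a => {b | (a, b) ∈ s}) (by simp)

theorem card_mul_le_sum_add_one_of_pairwise {ι : Type*} [Fintype ι] [Nontrivial ι] {f : ι → ℕ}
    {t : ℕ} (hf : Pairwise fun i j => 2 * t ≤ f i + f j + 1) :
    Fintype.card ι * t ≤ ∑ i, f i + 1 := by
  classical
  by_cases small : ∃ i, f i < t
  · obtain ⟨i, hi⟩ := small
    obtain ⟨j, hj⟩ := exists_ne i
    have sum_split : f i + (f j + ∑ l ∈ (univ.erase i).erase j, f l) = ∑ l, f l := by
      rw [add_sum_erase _ _ (by simp [hj]), add_sum_erase _ _ (mem_univ i)]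
    have rest_le : (Fintype.card ι - 2) * t ≤ ∑ l ∈ (univ.erase i).erase j, f l := by
      have card_rest : #((univ.erase i).erase j) = Fintype.card ι - 2 := by
        rw [card_erase_of_mem (by simp [hj]), card_erase_of_mem (mem_univ i), card_univ]
        rfl
      rw [← card_rest, ← smul_eq_mul]
      refine card_nsmul_le_sum _ _ _ fun l hl => ?_
      have := hf (ne_of_mem_erase (mem_of_mem_erase hl))
      omega
    obtain ⟨r, hr⟩ := Nat.exists_eq_add_of_le (Fintype.one_lt_card (α := ι))
    have := hf hj
    rw [hr, Nat.add_sub_cancel_left] at rest_le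
    rw [hr]
    linarith
  · push Not at small
    calc
      Fintype.card ι * t ≤ ∑ i, f i := by simpa using card_nsmul_le_sum univ f t fun i _ => small i
      _ ≤ ∑ i, f i + 1 := Nat.le_succ _

end Counting

section ComplLines

variable {F : Type*} [Field F] {V : Type*} [AddCommGroup V] [Module F V] [Fintype V]
variable {U : Type*} [Fintype U]

open scoped Classical in
/-- The extremal progression-free set: its slice over `u` is the complement of the line `D u`
through the origin, and the single point `(u₀, 0)` is added. -/
noncomputable def complLines (D : U → ℙ F V) (u₀ : U) : Finset (U × V) :=
  insert (u₀, 0) (univ.filter fun z => z.2 ∉ (D z.1).submodule)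

theorem mem_complLines {D : U → ℙ F V} {u₀ : U} {z : U × V} :
    z ∈ complLines D u₀ ↔ z = (u₀, 0) ∨ z.2 ∉ (D z.1).submodule := by
  simp [complLines]

theorem card_complLines [Fintype F] (D : U → ℙ F V) (u₀ : U) :
    #(complLines D u₀) = Fintype.card U * (Fintype.card V - Fintype.card F) + 1 := by
  classical
  have card_line (u : U) : #{x | x ∈ (D u).submodule} = Fintype.card F := by
    have := Module.card_eq_pow_finrank (K := F) (V := (D u).submodule)
    rwa [(D u).finrank_submodule, pow_one, Fintype.card_subtype] at this
  have card_slice (u : U) :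
      #{x | x ∉ (D u).submodule} = Fintype.card V - Fintype.card F := by
    rw [← compl_filter, card_compl, card_line]
  rw [complLines, card_insert_of_notMem (by simp), card_eq_sum_card_slice]
  simp [card_slice]

end ComplLines

section Progressions

theorem injective_add_nsmul_iff {G : Type*} [AddCommGroup G] {k : ℕ} (hk : 0 < k) {d : G}
    (hd : k • d = 0) (a : G) :
    Function.Injective (fun i : Fin k => a + (i : ℕ) • d) ↔ addOrderOf d = k := by
  constructor
  · intro injective
    by_contra ne
    have order_lt : addOrderOf d < k :=
      (Nat.le_of_dvd hk (addOrderOf_dvd_of_nsmul_eq_zero hd)).lt_of_ne ne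
    have order_eq_zero := @injective ⟨addOrderOf d, order_lt⟩ ⟨0, hk⟩ (by simp)
    exact (addOrderOf_pos_iff.mpr (isOfFinAddOrder_iff_nsmul_eq_zero.mpr ⟨k, hk, hd⟩)).ne'
      (Fin.mk.inj order_eq_zero)
  · rintro rfl i j hij
    exact Fin.ext (nsmul_injOn_Iio_addOrderOf i.isLt j.isLt (add_left_cancel hij))

theorem forall_add_nsmul_mem_iff_of_coprime {q p : ℕ} [NeZero q] [NeZero p] (hqp : q.Coprime p)
    {U V : Type*} [AddCommGroup U] [Module (ZMod q) U] [AddCommGroup V] [Module (ZMod p) V]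
    {A : Set (U × V)} {a d : U × V} :
    (∀ i : Fin (q * p), a + (i : ℕ) • d ∈ A) ↔
      ∀ (c : ZMod q) (t : ZMod p), (a.1 + c • d.1, a.2 + t • d.2) ∈ A := by
  have term_eq (i : ℕ) :
      a + i • d = (a.1 + (i : ZMod q) • d.1, a.2 + (i : ZMod p) • d.2) := by
    ext <;> simp [Nat.cast_smul_eq_nsmul]
  simp only [term_eq]
  refine ⟨fun h c t => ?_, fun h i => h _ _⟩
  let i := Nat.chineseRemainder hqp c.val t.val
  have i_lt : (i : ℕ) < q * p :=
    Nat.chineseRemainder_lt_mul hqp _ _ (NeZero.ne q) (NeZero.ne p)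
  have cast_q : ((i : ℕ) : ZMod q) = c := by
    rw [(ZMod.natCast_eq_natCast_iff _ _ _).mpr i.2.1, ZMod.natCast_zmod_val]
  have cast_p : ((i : ℕ) : ZMod p) = t := by
    rw [(ZMod.natCast_eq_natCast_iff _ _ _).mpr i.2.2, ZMod.natCast_zmod_val]
  simpa only [cast_q, cast_p] using h ⟨i, i_lt⟩

variable {p : ℕ} [Fact p.Prime]
variable {U : Type*} [AddCommGroup U] [Module (ZMod 2) U]
variable {V : Type*} [AddCommGroup V] [Module (ZMod p) V]

theorem addOrderOf_prod_eq_two_mul_iff (hp : Odd p) {d : U × V} :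
    addOrderOf d = 2 * p ↔ d.1 ≠ 0 ∧ d.2 ≠ 0 := by
  have addOrderOf_fst (h : d.1 ≠ 0) : addOrderOf d.1 = 2 :=
    addOrderOf_eq_prime (ZModModule.char_nsmul_eq_zero 2 _) h
  have addOrderOf_snd (h : d.2 ≠ 0) : addOrderOf d.2 = p :=
    addOrderOf_eq_prime (ZModModule.char_nsmul_eq_zero p _) h
  have p_pos : 0 < p := (Fact.out : p.Prime).pos
  have two_mul_ne_one : 1 ≠ 2 * p := by omega
  rw [Prod.addOrderOf]
  by_cases h₁ : d.1 = 0 <;> by_cases h₂ : d.2 = 0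
  · simp [h₁, h₂, two_mul_ne_one]
  · simp [h₁, addOrderOf_snd h₂, p_pos.ne']
  · simp [h₂, addOrderOf_fst h₁, (Fact.out : p.Prime).ne_one]
  · simp [h₁, h₂, addOrderOf_fst h₁, addOrderOf_snd h₂, hp.coprime_two_left.lcm_eq_mul]

theorem isDistinctAP_two_mul_iff (hp : Odd p) {A : Set (U × V)} :
    IsDistinctAP (2 * p) A ↔ ∃ u u' : U, u ≠ u' ∧ ∃ a w : V, w ≠ 0 ∧
      ∀ t : ZMod p, (u, a + t • w) ∈ A ∧ (u', a + t • w) ∈ A := by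
  have exponent (d : U × V) : (2 * p) • d = 0 := by
    ext
    · simp [mul_comm 2 p, mul_nsmul', ZModModule.char_nsmul_eq_zero 2]
    · simp [mul_nsmul', ZModModule.char_nsmul_eq_zero p]
  have forall_zmod_two (P : ZMod 2 → Prop) : (∀ c, P c) ↔ P 0 ∧ P 1 := Fin.forall_fin_two
  have isDistinctAP_iff : IsDistinctAP (2 * p) A ↔ ∃ a d : U × V,
      (∀ t : ZMod p, (a.1, a.2 + t • d.2) ∈ A ∧ (a.1 + d.1, a.2 + t • d.2) ∈ A) ∧
        d.1 ≠ 0 ∧ d.2 ≠ 0 := by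
    refine exists₂_congr fun a d => and_congr ?_ ?_
    · rw [forall_add_nsmul_mem_iff_of_coprime hp.coprime_two_left, forall_comm]
      simp only [forall_zmod_two, zero_smul, one_smul, add_zero]
    · rw [injective_add_nsmul_iff (Nat.mul_pos two_pos (Fact.out : p.Prime).pos) (exponent d),
        addOrderOf_prod_eq_two_mul_iff hp]
  rw [isDistinctAP_iff]
  constructor
  · rintro ⟨⟨u, a⟩, ⟨e, w⟩, mem, he, hw⟩
    exact ⟨u, u + e, by simpa [eq_comm] using he, a, w, hw, mem⟩
  · rintro ⟨u, u', hu, a, w, hw, mem⟩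
    exact ⟨(u, a), (u' - u, w), by simpa using mem, sub_ne_zero.mpr hu.symm, hw⟩

theorem not_isDistinctAP_two_mul_iff (hp : Odd p) {A : Set (U × V)} :
    ¬ IsDistinctAP (2 * p) A ↔
      Pairwise fun u u' => MeetsEveryLine (ZMod p) {x | (u, x) ∉ A ∨ (u', x) ∉ A} := by
  rw [isDistinctAP_two_mul_iff hp]
  simp only [Pairwise, MeetsEveryLine, Set.mem_ofPred_eq, ← not_and_or]
  push Not
  rfl

end Progressions

section Extremal

variable {p : ℕ} [Fact p.Prime]
variable {U : Type*} [AddCommGroup U] [Module (ZMod 2) U] [Fintype U]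

theorem card_mul_le_card_compl_of_not_isDistinctAP [DecidableEq U] [Nontrivial U] (hp : Odd p)
    {A : Finset (U × (Fin 2 → ZMod p))}
    (hA : ¬ IsDistinctAP (2 * p) (A : Set (U × (Fin 2 → ZMod p)))) :
    Fintype.card U * p ≤ #Aᶜ + 1 := by
  rw [card_eq_sum_card_slice]
  refine card_mul_le_sum_add_one_of_pairwise fun u u' hu => ?_
  have meets : MeetsEveryLine (ZMod p) {x | (u, x) ∉ A ∨ (u', x) ∉ A} :=
    (not_isDistinctAP_two_mul_iff hp).mp hA hu
  have coe_union : {x | (u, x) ∉ A ∨ (u', x) ∉ A} =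
      (↑(({x | (u, x) ∈ Aᶜ} : Finset (Fin 2 → ZMod p)) ∪
        ({x | (u', x) ∈ Aᶜ} : Finset (Fin 2 → ZMod p))) : Set (Fin 2 → ZMod p)) := by
    ext x
    simp
  rw [coe_union] at meets
  calc
    2 * p = 2 * Fintype.card (ZMod p) := by rw [ZMod.card]
    _ ≤ _ := meets.two_mul_card_le
    _ ≤ _ := Nat.succ_le_succ (card_union_le _ _)

variable {V : Type*} [AddCommGroup V] [Module (ZMod p) V] [Fintype V]

theorem not_isDistinctAP_complLines (hp : Odd p) (hV : finrank (ZMod p) V = 2)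
    {D : U → ℙ (ZMod p) V} (hD : Function.Injective D) (u₀ : U) :
    ¬ IsDistinctAP (2 * p) (complLines D u₀ : Set (U × V)) := by
  rw [not_isDistinctAP_two_mul_iff hp]
  intro u u' hu a w hw
  obtain ⟨t, ht⟩ := meetsEveryLine_submodule_union hV (hD.ne hu) a w hw
  refine ⟨t, ?_⟩
  simp only [Set.mem_ofPred_eq, mem_coe, mem_complLines]
  by_cases at_zero : a + t • w = 0
  · have ne_or_ne : u ≠ u₀ ∨ u' ≠ u₀ := by
      by_contra! h
      exact hu (h.1.trans h.2.symm)
    simpa [at_zero] using ne_or_ne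
  · simpa [at_zero] using ht

theorem isGreatest_card_not_isDistinctAP [Nontrivial U] (hp : Odd p)
    (hU : Fintype.card U ≤ p + 1) :
    IsGreatest {s | ∃ A : Finset (U × (Fin 2 → ZMod p)),
      ¬ IsDistinctAP (2 * p) (A : Set (U × (Fin 2 → ZMod p))) ∧ #A = s}
      (Fintype.card U * (p ^ 2 - p) + 1) := by
  classical
  have finrank_eq : finrank (ZMod p) (Fin 2 → ZMod p) = 2 := finrank_fin_fun _
  have card_eq : Fintype.card (Fin 2 → ZMod p) = p ^ 2 := by simp
  constructor
  · let := Fintype.ofFinite (ℙ (ZMod p) (Fin 2 → ZMod p))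
    have card_le : Fintype.card U ≤ Fintype.card (ℙ (ZMod p) (Fin 2 → ZMod p)) := by
      rwa [← Nat.card_eq_fintype_card (α := ℙ _ _),
        Projectivization.card_of_finrank_two _ _ finrank_eq, Nat.card_zmod]
    obtain ⟨D⟩ := Function.Embedding.nonempty_of_card_le card_le
    exact ⟨complLines D 0, not_isDistinctAP_complLines hp finrank_eq D.injective 0,
      by rw [card_complLines, card_eq, ZMod.card]⟩
  · rintro _ ⟨A, hA, rfl⟩
    have compl_le := card_mul_le_card_compl_of_not_isDistinctAP hp hA
    have card_add := A.card_add_card_compl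
    rw [Fintype.card_prod, card_eq] at card_add
    rw [Nat.mul_sub]
    omega

end Extremal

/-- The Chinese remainder isomorphism, applied coordinatewise. -/
noncomputable def funZModMulAddEquiv {q p : ℕ} (hqp : q.Coprime p) (ι : Type*) :
    (ι → ZMod (q * p)) ≃+ (ι → ZMod q) × (ι → ZMod p) :=
  (AddEquiv.piCongrRight fun _ => (ZMod.chineseRemainder hqp).toAddEquiv).trans
    { Equiv.arrowProdEquivProdArrow ι _ _ with map_add' := fun _ _ => rfl }

theorem r6_Z6_two_general {p : ℕ} (hp : p.Prime) (hodd : Odd p) :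
    rAP (2 * p) (2 * p) 2 = (2 * p - 1) ^ 2 := by
  have : Fact p.Prime := ⟨hp⟩
  have two_lt : 2 < p := hp.two_le.lt_of_ne (by rintro rfl; contradiction)
  have card_eq : Fintype.card (Fin 2 → ZMod 2) = 4 := rfl
  rw [rAP_eq_sSup_of_addEquiv (funZModMulAddEquiv hodd.coprime_two_left (Fin 2)),
    (isGreatest_card_not_isDistinctAP hodd (by omega)).csSup_eq, card_eq]
  zify [Nat.le_self_pow two_ne_zero p, show 1 ≤ 2 * p by omega]
  ring

theorem r6_Z6_two : rAP 6 6 2 = 25 :=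
  r6_Z6_two_general Nat.prime_three (by decide)
end

section
/- r_6(ℤ_6^3) ≥ 116, i.e., there exists a subset of (ℤ/6ℤ)^3 of size 116 containing no 6-term arithmetic progression of pairwise distinct elements. -/
/-!
A six-term progression of distinct elements in `(ℤ/6ℤ)^n ≅ 𝔽₂^n × 𝔽₃^n` is a coset of a cyclic group
of order six, that is, the product of a pair `{x, y}` of distinct points of `𝔽₂^n` with an affine
line of `𝔽₃^n`. A subset of the product, regarded as a family of slices `A x ⊆ 𝔽₃^n` indexed by
`x ∈ 𝔽₂^n`, is therefore free of such progressions as soon as any two of its slices meet in a cap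
set. For `n = 3` there are eight slices in `𝔽₃³`, and a family of total size 116 exists.
-/

section Group

variable {G H : Type*} [AddCommGroup G] [AddCommGroup H] {k p q : ℕ}

theorem IsDistinctAP.of_preimage {f : G →+ H} (hf : Function.Injective f) {B : Set H}
    (h : IsDistinctAP k (f ⁻¹' B)) : IsDistinctAP k B := by
  obtain ⟨a, d, hmem, hinj⟩ := h
  have map_term (i : Fin k) : f (a + (i : ℕ) • d) = f a + (i : ℕ) • f d := by
    rw [map_add, map_nsmul]
  refine ⟨f a, f d, fun i => map_term i ▸ hmem i, ?_⟩
  simpa only [Function.comp_def, map_term] using hf.comp hinj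

theorem IsDistinctAP.not_threeAPFree {A : Set G} (h : IsDistinctAP 3 A) : ¬ ThreeAPFree A := by
  obtain ⟨a, d, hmem, hinj⟩ := h
  intro hfree
  have hterms : (a + 0 • d) + (a + 2 • d) = (a + 1 • d) + (a + 1 • d) := by abel
  have heq : a + 0 • d = a + 1 • d := hfree (hmem 0) (hmem 1) (hmem 2) hterms
  exact absurd (hinj heq : (0 : Fin 3) = 1) (by decide)

theorem exists_fin_mul_modEq [NeZero p] [NeZero q] (hpq : p.Coprime q) (i j : ℕ) :
    ∃ k : Fin (p * q), k ≡ i [MOD p] ∧ k ≡ j [MOD q] :=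
  ⟨⟨Nat.chineseRemainder hpq i j,
    Nat.chineseRemainder_lt_mul hpq i j (NeZero.ne p) (NeZero.ne q)⟩,
    (Nat.chineseRemainder hpq i j).2⟩

theorem injective_fst_and_snd_of_injective_prod [NeZero p] [NeZero q] (hpq : p.Coprime q)
    {a d : G} {b e : H} (hd : p • d = 0) (he : q • e = 0)
    (hinj : Function.Injective fun i : Fin (p * q) => (a, b) + (i : ℕ) • (d, e)) :
    (Function.Injective fun i : Fin p => a + (i : ℕ) • d) ∧
      Function.Injective fun j : Fin q => b + (j : ℕ) • e := by
  suffices hcoords : ∀ (i i' : Fin p) (j j' : Fin q), a + (i : ℕ) • d = a + (i' : ℕ) • d →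
      b + (j : ℕ) • e = b + (j' : ℕ) • e → i = i' ∧ j = j' from
    ⟨fun i i' h => (hcoords i i' 0 0 h rfl).1, fun j j' h => (hcoords 0 0 j j' rfl h).2⟩
  intro i i' j j' hfst hsnd
  obtain ⟨k, hki, hkj⟩ := exists_fin_mul_modEq hpq i j
  obtain ⟨k', hki', hkj'⟩ := exists_fin_mul_modEq hpq i' j'
  have hk : k = k' := by
    refine hinj (Prod.ext ?_ ?_)
    · change a + (k : ℕ) • d = a + (k' : ℕ) • d
      rwa [nsmul_eq_nsmul_of_modEq hki hd, nsmul_eq_nsmul_of_modEq hki' hd]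
    · change b + (k : ℕ) • e = b + (k' : ℕ) • e
      rwa [nsmul_eq_nsmul_of_modEq hkj he, nsmul_eq_nsmul_of_modEq hkj' he]
  subst hk
  exact ⟨Fin.ext ((hki.symm.trans hki').eq_of_lt_of_lt i.2 i'.2),
    Fin.ext ((hkj.symm.trans hkj').eq_of_lt_of_lt j.2 j'.2)⟩

theorem IsDistinctAP.exists_iInter_slices [NeZero p] [NeZero q] (hpq : p.Coprime q)
    (hG : ∀ g : G, p • g = 0) (hH : ∀ h : H, q • h = 0) {A : G → Set H}
    (hA : IsDistinctAP (p * q) {x : G × H | x.2 ∈ A x.1}) :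
    ∃ a d : G, (Function.Injective fun i : Fin p => a + (i : ℕ) • d) ∧
      IsDistinctAP q (⋂ i : Fin p, A (a + (i : ℕ) • d)) := by
  obtain ⟨⟨a, b⟩, ⟨d, e⟩, hmem, hinj⟩ := hA
  obtain ⟨hinj_fst, hinj_snd⟩ :=
    injective_fst_and_snd_of_injective_prod hpq (hG d) (hH e) hinj
  refine ⟨a, d, hinj_fst, b, e, fun j => Set.mem_iInter.2 fun i => ?_, hinj_snd⟩
  obtain ⟨k, hki, hkj⟩ := exists_fin_mul_modEq hpq i j
  have hk : b + (k : ℕ) • e ∈ A (a + (k : ℕ) • d) := hmem k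
  rwa [nsmul_eq_nsmul_of_modEq hki (hG d), nsmul_eq_nsmul_of_modEq hkj (hH e)] at hk

end Group

theorem card_le_rAP {k m n : ℕ} [NeZero m] {A : Finset (Fin n → ZMod m)}
    (hA : ¬ IsDistinctAP k (A : Set (Fin n → ZMod m))) : A.card ≤ rAP k m n := by
  refine le_csSup ⟨Fintype.card (Fin n → ZMod m), ?_⟩ ⟨A, hA, rfl⟩
  rintro _ ⟨B, -, rfl⟩
  exact B.card_le_univ

/-- The Chinese remainder isomorphism `(ℤ/pqℤ)^ι ≅ (ℤ/pℤ)^ι × (ℤ/qℤ)^ι`, applied coordinatewise. -/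
def arrowZModMulEquiv (ι : Type*) {p q : ℕ} (hpq : p.Coprime q) :
    (ι → ZMod (p * q)) ≃+ (ι → ZMod p) × (ι → ZMod q) where
  toEquiv := (Equiv.piCongrRight fun _ => (ZMod.chineseRemainder hpq).toEquiv).trans
    (Equiv.arrowProdEquivProdArrow ι (fun _ => ZMod p) fun _ => ZMod q)
  map_add' v w := by ext <;> simp

theorem card_filter_snd_mem {α β : Type*} [Fintype α] [Fintype β] [DecidableEq β]
    (A : α → Finset β) : Finset.card {x : α × β | x.2 ∈ A x.1} = ∑ a, (A a).card := by
  rw [Finset.card_filter, Fintype.sum_prod_type]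
  simp

theorem sum_card_le_rAP_mul {p q n : ℕ} [NeZero p] [NeZero q] (hpq : p.Coprime q)
    {A : (Fin n → ZMod p) → Finset (Fin n → ZMod q)}
    (hA : ∀ a d, (Function.Injective fun i : Fin p => a + (i : ℕ) • d) →
      ¬ IsDistinctAP q (⋂ i : Fin p, (A (a + (i : ℕ) • d) : Set (Fin n → ZMod q)))) :
    ∑ x, (A x).card ≤ rAP (p * q) (p * q) n := by
  let e := arrowZModMulEquiv (Fin n) hpq
  let S : Finset ((Fin n → ZMod p) × (Fin n → ZMod q)) := {x | x.2 ∈ A x.1}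
  let B : Finset (Fin n → ZMod (p * q)) := S.map e.symm.toEquiv.toEmbedding
  have hpreimage : (B : Set (Fin n → ZMod (p * q))) = e.toAddMonoidHom ⁻¹' {x | x.2 ∈ A x.1} := by
    ext v
    simp [B, S, AddEquiv.symm_apply_eq]
  have hfree : ¬ IsDistinctAP (p * q) (B : Set (Fin n → ZMod (p * q))) := by
    intro hB
    rw [hpreimage] at hB
    obtain ⟨a, d, hinj, hslices⟩ := (hB.of_preimage e.injective).exists_iInter_slices hpq
      (ZModModule.char_nsmul_eq_zero p) (ZModModule.char_nsmul_eq_zero q)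
      (A := fun x => (A x : Set (Fin n → ZMod q)))
    exact hA a d hinj hslices
  calc ∑ x, (A x).card = S.card := (card_filter_snd_mem A).symm
    _ = B.card := (Finset.card_map _).symm
    _ ≤ rAP (p * q) (p * q) n := card_le_rAP hfree

theorem sum_card_le_rAP_six {n : ℕ} {A : (Fin n → ZMod 2) → Finset (Fin n → ZMod 3)}
    (hA : Pairwise fun x y => ThreeAPFree (↑(A x ∩ A y) : Set (Fin n → ZMod 3))) :
    ∑ x, (A x).card ≤ rAP 6 6 n := by
  refine sum_card_le_rAP_mul (p := 2) (q := 3) (by decide) fun a d hinj hAP => ?_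
  have hne : a + 0 • d ≠ a + 1 • d := hinj.ne (by decide : (0 : Fin 2) ≠ 1)
  refine hAP.not_threeAPFree ((hA hne).mono fun v hv => ?_)
  rw [Set.mem_iInter] at hv
  exact Finset.mem_inter.2 ⟨hv 0, hv 1⟩

/-- Eight subsets of `𝔽₃³`, of total size 116, that pairwise meet in cap sets; they were found by
computer search. A point of `𝔽₃³` is encoded by the number with these base-3 digits, least
significant digit first. -/
def capFamilyCodes : Fin (2 ^ 3) → Finset (Fin (3 ^ 3)) :=
  ![
    {1, 2, 3, 5, 6, 7, 9, 11, 16, 17, 18, 19, 20, 22, 24, 26},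
    {0, 4, 5, 6, 8, 9, 10, 13, 14, 15, 17, 19, 22, 23, 26},
    {1, 6, 8, 11, 12, 13, 15, 16, 17, 19, 20, 21, 23, 24, 25},
    {0, 1, 3, 4, 6, 7, 9, 10, 12, 13, 15, 16, 18, 19},
    {0, 1, 2, 7, 9, 10, 11, 12, 14, 21, 22, 23, 24, 25, 26},
    {0, 2, 4, 5, 6, 7, 9, 14, 15, 16, 20, 21, 22},
    {0, 2, 3, 5, 8, 10, 11, 13, 14, 18, 19, 21, 22, 24},
    {3, 4, 7, 10, 11, 12, 13, 14, 17, 18, 20, 23, 25, 26}]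

/-- The family `capFamilyCodes` as a family of slices, indexed by the points of `𝔽₂³`. -/
def capFamily (x : Fin 3 → ZMod 2) : Finset (Fin 3 → ZMod 3) :=
  (capFamilyCodes (finFunctionFinEquiv (m := 2) x)).map
    (finFunctionFinEquiv (m := 3)).symm.toEmbedding

theorem pairwise_threeAPFree_capFamily_inter :
    Pairwise fun x y => ThreeAPFree (↑(capFamily x ∩ capFamily y) : Set (Fin 3 → ZMod 3)) := by
  unfold Pairwise
  decide +kernel

theorem sum_card_capFamily : ∑ x, (capFamily x).card = 116 := by
  decide +kernel

theorem r6_Z6_three_lower : 116 ≤ rAP 6 6 3 :=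
  sum_card_capFamily ▸ sum_card_le_rAP_six pairwise_threeAPFree_capFamily_inter
end

section
/- r_6(ℤ_6^3) ≤ 124, i.e., every subset of (ℤ/6ℤ)^3 of size at least 125 contains a 6-term arithmetic progression of pairwise distinct elements. -/
/-!
Split `(ℤ/6ℤ)^3` as `U × V` with `U = (ℤ/2ℤ)^3` and `V = (ℤ/3ℤ)^3`. If a line of `V` lies in the
fibers of `A` over two points of `U`, the product of these two points with the line is a 6-term
progression. So, if `A` has no such progression, each of the 117 lines of `V` lies in at most one
of the 8 fibers. On the other hand a set `S ⊆ V` contains at least `3 * #S - 32` lines: a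
functional chosen by averaging cuts `S` into three parallel slices of sizes at most 9 which are
unbalanced enough to force that many lines, and this is a finite check on the three sizes. Summing
over the fibers, `3 * #A - 256 ≤ 117`.
-/

open Finset

section FixedPoints

lemma card_modEq_card_fixed {α : Type*} [DecidableEq α] {p : ℕ} [Fact p.Prime] {s : Finset α}
    {f : α → α} (hmaps : Set.MapsTo f s s) (hiter : ∀ x ∈ s, f^[p] x = x) :
    #s ≡ #{x ∈ s | f x = x} [MOD p] := by
  let g : Function.End s := hmaps.restrict
  have hg : g ^ p ^ 1 = 1 := by
    funext x
    apply Subtype.ext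
    rw [pow_one]
    exact (congrArg Subtype.val (congrFun (hmaps.iterate_restrict p) x)).trans (hiter x x.2)
  have hcard : Fintype.card (Function.fixedPoints g) = #{x ∈ s | f x = x} := by
    rw [Fintype.card_subtype]
    refine card_bij (fun x _ ↦ x) (fun x hx ↦ ?_) (fun _ _ _ _ ↦ Subtype.ext) fun x hx ↦ ?_
    · exact mem_filter.2 ⟨x.2, congrArg Subtype.val (mem_filter.1 hx).2⟩
    · obtain ⟨hxs, hfx⟩ := mem_filter.1 hx
      exact ⟨⟨x, hxs⟩, mem_filter.2 ⟨mem_univ _, Subtype.ext hfx⟩, rfl⟩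
  simpa [hcard] using Equiv.Perm.card_fixedPoints_modEq hg

end FixedPoints

section ZeroSumPairs

variable {G : Type*} [AddCommGroup G] [DecidableEq G]

/-- The solutions of `x + y + z = 0` with `x ∈ A`, `y ∈ B` and `z ∈ C`, recorded as the pairs
`(x, y)`. In a vector space over `ZMod 3`, a solution is either constant or enumerates a line, so
`zeroSumPairs S S S` counts each point of `S` once and each line inside `S` six times. -/
def zeroSumPairs (A B C : Finset G) : Finset (G × G) :=
  {p ∈ A ×ˢ B | -p.1 - p.2 ∈ C}

variable {A B C P S : Finset G}

lemma mem_zeroSumPairs {p : G × G} :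
    p ∈ zeroSumPairs A B C ↔ p.1 ∈ A ∧ p.2 ∈ B ∧ -p.1 - p.2 ∈ C := by
  simp only [zeroSumPairs, mem_filter, mem_product, and_assoc]

variable (A B C) in
lemma card_zeroSumPairs_eq_sum :
    #(zeroSumPairs A B C) = ∑ x ∈ A, #{y ∈ B | -x - y ∈ C} := by
  simp only [zeroSumPairs, card_filter, sum_product]

variable (A B C) in
lemma card_zeroSumPairs_left_comm : #(zeroSumPairs A B C) = #(zeroSumPairs B A C) :=
  card_nbij' Prod.swap Prod.swap
    (by simp +contextual [Set.MapsTo, mem_zeroSumPairs, sub_eq_add_neg, add_comm])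
    (by simp +contextual [Set.MapsTo, mem_zeroSumPairs, sub_eq_add_neg, add_comm])
    (by simp [Set.LeftInvOn]) (by simp [Set.LeftInvOn])

variable (A B C) in
lemma card_zeroSumPairs_right_comm : #(zeroSumPairs A B C) = #(zeroSumPairs A C B) :=
  card_nbij' (fun p ↦ (p.1, -p.1 - p.2)) (fun p ↦ (p.1, -p.1 - p.2))
    (by simp +contextual [Set.MapsTo, mem_zeroSumPairs])
    (by simp +contextual [Set.MapsTo, mem_zeroSumPairs])
    (by simp [Set.LeftInvOn]) (by simp [Set.LeftInvOn])

lemma card_zeroSumPairs_add_sdiff (A B : Finset G) (hSP : S ⊆ P) :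
    #(zeroSumPairs A B S) + #(zeroSumPairs A B (P \ S)) = #(zeroSumPairs A B P) := by
  simp only [card_zeroSumPairs_eq_sum, ← sum_add_distrib]
  refine sum_congr rfl fun x _ ↦ ?_
  rw [← card_union_of_disjoint]
  · congr 1
    ext y
    have := @hSP (-x - y)
    grind
  · exact disjoint_filter.2 fun y _ hS hsdiff ↦ (mem_sdiff.1 hsdiff).2 hS

/-- `P` contains the third point of every solution of `x + y + z = 0` with `x, y ∈ P`. In a vector
space over `ZMod 3`, the nonempty such sets are the affine subspaces. -/
def IsThirdPointClosed (P : Finset G) : Prop :=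
  ∀ x ∈ P, ∀ y ∈ P, -x - y ∈ P

lemma IsThirdPointClosed.card_zeroSumPairs_eq_mul (hP : IsThirdPointClosed P)
    (hA : A ⊆ P) (hB : B ⊆ P) :
    #(zeroSumPairs A B P) = #A * #B := by
  rw [zeroSumPairs, filter_true_of_mem, card_product]
  simp only [mem_product]
  exact fun p hp ↦ hP _ (hA hp.1) _ (hB hp.2)

lemma IsThirdPointClosed.card_zeroSumPairs_self_add_sdiff_self (hP : IsThirdPointClosed P)
    (hS : S ⊆ P) :
    #(zeroSumPairs S S S) + #(zeroSumPairs (P \ S) (P \ S) (P \ S)) + #S * #(P \ S) =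
      #S ^ 2 + #(P \ S) ^ 2 := by
  set T := P \ S
  have hT : T ⊆ P := sdiff_subset
  have hSS : #(zeroSumPairs S S S) + #(zeroSumPairs S S T) = #S * #S :=
    (card_zeroSumPairs_add_sdiff S S hS).trans (hP.card_zeroSumPairs_eq_mul hS hS)
  have hST : #(zeroSumPairs S T S) + #(zeroSumPairs S T T) = #S * #T :=
    (card_zeroSumPairs_add_sdiff S T hS).trans (hP.card_zeroSumPairs_eq_mul hS hT)
  have hTT : #(zeroSumPairs T T S) + #(zeroSumPairs T T T) = #T * #T :=
    (card_zeroSumPairs_add_sdiff T T hS).trans (hP.card_zeroSumPairs_eq_mul hT hT)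
  have hSST := card_zeroSumPairs_right_comm S S T
  have hSTT : #(zeroSumPairs S T T) = #(zeroSumPairs T T S) := by
    rw [card_zeroSumPairs_left_comm, card_zeroSumPairs_right_comm]
  nlinarith

lemma card_mul_add_le_card_zeroSumPairs (hB : B ⊆ P) (hC : ∀ x ∈ A, ∀ z ∈ C, -x - z ∈ P) :
    #A * (#B + #C) ≤ #(zeroSumPairs A B C) + #A * #P := by
  rw [card_zeroSumPairs_eq_sum, ← smul_eq_mul, ← smul_eq_mul, ← sum_const, ← sum_const,
    ← sum_add_distrib]
  refine sum_le_sum fun x hx ↦ ?_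
  have hreflect : #(C.image (-x - ·)) = #C := card_image_of_injective _ sub_right_injective
  have hinter : {y ∈ B | -x - y ∈ C} = B ∩ C.image (-x - ·) := by
    ext y
    simp only [mem_filter, mem_inter, mem_image]
    exact and_congr_right fun _ ↦
      ⟨fun h ↦ ⟨_, h, sub_sub_cancel _ _⟩, fun ⟨z, hz, h⟩ ↦ by rwa [← h, sub_sub_cancel]⟩
  rw [hinter, ← hreflect, ← card_union_add_card_inter, add_comm]
  gcongr
  exact union_subset hB (image_subset_iff.2 (hC x hx))

end ZeroSumPairs

section ExponentThree

variable {V : Type*} [AddCommGroup V] [Module (ZMod 3) V]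

lemma neg_sub_eq_iff_eq {x y : V} : -x - y = y ↔ x = y := by
  have hy : y + y + y = 0 := by
    rw [← ZModModule.char_nsmul_eq_zero 3 y]
    abel
  rw [sub_eq_iff_eq_add, neg_eq_iff_add_eq_zero, ← hy, add_comm x, add_right_inj]

variable [DecidableEq V]

lemma odd_card_filter_neg_sub_mem {S : Finset V} {x : V} (hx : x ∈ S) :
    Odd #{y ∈ S | -x - y ∈ S} := by
  have hmod : #{y ∈ S | -x - y ∈ S} ≡ 1 [MOD 2] := by
    have hfixed : {y ∈ {y ∈ S | -x - y ∈ S} | -x - y = y} = {x} := by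
      ext y
      simp only [mem_filter, neg_sub_eq_iff_eq, mem_singleton]
      grind [neg_sub_eq_iff_eq (V := V)]
    have h := card_modEq_card_fixed (p := 2) (s := {y ∈ S | -x - y ∈ S}) (f := fun y ↦ -x - y)
      (by simp +contextual [Set.MapsTo]) (by simp)
    rwa [hfixed, card_singleton] at h
  exact Nat.odd_iff.2 hmod

lemma card_zeroSumPairs_modEq_two (S : Finset V) : #(zeroSumPairs S S S) ≡ #S [MOD 2] := by
  rw [card_zeroSumPairs_eq_sum, card_eq_sum_ones]
  exact Nat.ModEq.sum fun x hx ↦ Nat.odd_iff.1 (odd_card_filter_neg_sub_mem hx)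

variable (S : Finset V)

lemma card_filter_fst_eq_snd_zeroSumPairs : #{p ∈ zeroSumPairs S S S | p.1 = p.2} = #S := by
  have hdiag : {p ∈ zeroSumPairs S S S | p.1 = p.2} = S.diag := by
    ext p
    simp only [mem_filter, mem_zeroSumPairs, mem_diag]
    grind [neg_sub_eq_iff_eq (V := V)]
  rw [hdiag, diag_card]

lemma card_zeroSumPairs_modEq_three : #(zeroSumPairs S S S) ≡ #S [MOD 3] := by
  have hrot (x y : V) : -y - (-x - y) = x := by abel
  have hmod := card_modEq_card_fixed (p := 3) (s := zeroSumPairs S S S)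
    (f := fun p ↦ (p.2, -p.1 - p.2))
    (by simp +contextual [Set.MapsTo, mem_zeroSumPairs, hrot]) (by simp [hrot])
  have hfixed (p : V × V) : (p.2, -p.1 - p.2) = p ↔ p.1 = p.2 := by
    rw [Prod.ext_iff, neg_sub_eq_iff_eq, eq_comm, and_self]
  simpa only [hfixed, card_filter_fst_eq_snd_zeroSumPairs] using hmod

lemma card_zeroSumPairs_modEq_six : #(zeroSumPairs S S S) ≡ #S [MOD 6] :=
  (Nat.modEq_and_modEq_iff_modEq_mul (by decide : Nat.Coprime 2 3)).1
    ⟨card_zeroSumPairs_modEq_two S, card_zeroSumPairs_modEq_three S⟩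

lemma card_le_card_zeroSumPairs : #S ≤ #(zeroSumPairs S S S) :=
  (card_filter_fst_eq_snd_zeroSumPairs S).ge.trans (card_filter_le _ _)

variable {S}

lemma card_zeroSumPairs_le_of_even (hS : Even #S) :
    #(zeroSumPairs S S S) ≤ #S * (#S - 1) := by
  rw [card_zeroSumPairs_eq_sum, ← smul_eq_mul, ← sum_const]
  refine sum_le_sum fun x hx ↦ Nat.le_sub_one_of_lt ((card_filter_le _ _).lt_of_ne fun h ↦ ?_)
  exact Nat.not_even_iff_odd.2 (odd_card_filter_neg_sub_mem hx) (h ▸ hS)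

/-- The fewest zero-sum pairs in `s` points of the affine plane over `ZMod 3`, that is
`s + 6 * ℓ` where `ℓ = 0, 0, 0, 0, 0, 1, 2, 5, 8, 12` is the fewest lines in `0, …, 9` points. -/
def minZeroSumPairs (s : ℕ) : ℕ :=
  max s (max (7 * s - 24) (max (19 * s - 96) (25 * s - 144)))

lemma IsThirdPointClosed.minZeroSumPairs_le {P : Finset V} (hP : IsThirdPointClosed P)
    (hcard : #P = 9) (hS : S ⊆ P) : minZeroSumPairs #S ≤ #(zeroSumPairs S S S) := by
  have hid := hP.card_zeroSumPairs_self_add_sdiff_self hS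
  have hlower := card_le_card_zeroSumPairs S
  have hmod : _ % 6 = _ % 6 := card_zeroSumPairs_modEq_six S
  have hsdiff_le : #(zeroSumPairs (P \ S) (P \ S) (P \ S)) ≤ #(P \ S) * #(P \ S) :=
    (card_filter_le _ _).trans (card_product _ _).le
  have hsdiff_le_of_even := card_zeroSumPairs_le_of_even (S := P \ S)
  have hsize : #(P \ S) = 9 - #S := by rw [card_sdiff_of_subset hS, hcard]
  have hle : #S ≤ 9 := hcard ▸ card_le_card hS
  rw [hsize] at hid hsdiff_le hsdiff_le_of_even
  generalize #(zeroSumPairs (P \ S) (P \ S) (P \ S)) = z' at *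
  generalize #(zeroSumPairs S S S) = z at *
  clear hsize
  generalize #S = s at *
  unfold minZeroSumPairs
  rw [Nat.even_iff] at hsdiff_le_of_even
  interval_cases s <;> omega

end ExponentThree

section Averaging

lemma card_dual_eq (F V : Type*) [Field F] [AddCommGroup V] [Module F V] [Module.Finite F V] :
    Nat.card (Module.Dual F V) = Nat.card V := by
  rw [Module.natCard_eq_pow_finrank (K := F) (V := V),
    Module.natCard_eq_pow_finrank (K := F) (V := Module.Dual F V), Subspace.dual_finrank_eq]

lemma card_mul_card_filter_apply_eq {G H : Type*} [AddGroup G] [Fintype G] [AddGroup H]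
    [Fintype H] [DecidableEq H] {f : G →+ H} (hf : Function.Surjective f) (c : H) :
    Fintype.card H * #{x | f x = c} = Fintype.card G := by
  have hfiber (c' : H) : #{x | f x = c'} = #{x | f x = c} :=
    AddMonoidHom.card_fiber_eq_of_mem_range f (hf c') (hf c)
  have hsum : #(univ : Finset G) = ∑ c', #{x | f x = c'} :=
    card_eq_sum_card_fiberwise (by simp)
  rw [← card_univ (α := G), hsum, sum_congr rfl fun c' _ ↦ hfiber c', sum_const, card_univ,
    smul_eq_mul]

variable {F V : Type*} [Field F] [Fintype F] [DecidableEq F] [AddCommGroup V] [Module F V]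

lemma card_mul_card_hyperplane [Fintype V] {φ : Module.Dual F V} (hφ : φ ≠ 0) (c : F) :
    Fintype.card F * #{x | φ x = c} = Fintype.card V :=
  card_mul_card_filter_apply_eq (f := φ.toAddMonoidHom) (LinearMap.surjective hφ) c

variable [Fintype (Module.Dual F V)]

lemma card_mul_card_filter_dual_apply_eq {x y : V} (hxy : x ≠ y) :
    Fintype.card F * #{φ : Module.Dual F V | φ x = φ y} = Fintype.card (Module.Dual F V) := by
  have heval : Module.Dual.eval F V (x - y) ≠ 0 := by
    rw [Ne, Module.eval_apply_eq_zero_iff]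
    exact sub_ne_zero.2 hxy
  have heval_apply (φ : Module.Dual F V) : Module.Dual.eval F V (x - y) φ = 0 ↔ φ x = φ y := by
    rw [Module.Dual.eval_apply, map_sub, sub_eq_zero]
  simpa only [heval_apply] using card_mul_card_hyperplane heval 0

lemma card_mul_sum_card_filter_dual_apply_eq [DecidableEq V] (R : Finset (V × V)) :
    Fintype.card F * ∑ φ : Module.Dual F V, #{p ∈ R | φ p.1 = φ p.2} =
      Fintype.card (Module.Dual F V) * (#R + (Fintype.card F - 1) * #{p ∈ R | p.1 = p.2}) := by
  have hpair (p : V × V) : Fintype.card F * #{φ : Module.Dual F V | φ p.1 = φ p.2} =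
      Fintype.card (Module.Dual F V) * (1 + (Fintype.card F - 1) * if p.1 = p.2 then 1 else 0) := by
    split_ifs with h
    · simp [h, Nat.add_sub_cancel' Fintype.card_pos, mul_comm]
    · simp [card_mul_card_filter_dual_apply_eq h]
  calc
    _ = ∑ p ∈ R, Fintype.card F * #{φ : Module.Dual F V | φ p.1 = φ p.2} := by
      simp only [card_filter, mul_sum]
      rw [sum_comm]
    _ = _ := by
      simp only [hpair, ← mul_sum, sum_add_distrib, ← card_eq_sum_ones, ← card_filter]

end Averaging

section Slices

variable {V : Type*} [AddCommGroup V] [Module (ZMod 3) V]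

/-- The part of `S` on the hyperplane `φ = c`. -/
def hyperplaneSlice (φ : Module.Dual (ZMod 3) V) (S : Finset V) (c : ZMod 3) : Finset V :=
  {x ∈ S | φ x = c}

variable {φ : Module.Dual (ZMod 3) V} {S : Finset V} {c : ZMod 3} {x : V}

lemma mem_hyperplaneSlice : x ∈ hyperplaneSlice φ S c ↔ x ∈ S ∧ φ x = c := mem_filter

lemma hyperplaneSlice_subset_univ [Fintype V] :
    hyperplaneSlice φ S c ⊆ hyperplaneSlice φ univ c :=
  filter_subset_filter _ (subset_univ _)

lemma isThirdPointClosed_hyperplaneSlice_univ [Fintype V] :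
    IsThirdPointClosed (hyperplaneSlice φ univ c) := by
  simp only [IsThirdPointClosed, mem_hyperplaneSlice, mem_univ, true_and, map_sub, map_neg]
  intro x hx y hy
  rw [hx, hy, neg_sub_eq_iff_eq]

lemma card_hyperplaneSlice_univ [Fintype V] (hφ : φ ≠ 0) :
    3 * #(hyperplaneSlice φ univ c) = Fintype.card V :=
  card_mul_card_hyperplane hφ c

variable (φ S)

lemma sum_card_hyperplaneSlice : ∑ c, #(hyperplaneSlice φ S c) = #S :=
  (card_eq_sum_card_fiberwise (by simp)).symm

lemma sum_card_hyperplaneSlice_sq :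
    ∑ c, #(hyperplaneSlice φ S c) ^ 2 = #{p ∈ S ×ˢ S | φ p.1 = φ p.2} := by
  rw [card_eq_sum_card_fiberwise (f := fun p ↦ φ p.1) (t := univ) (by simp)]
  refine sum_congr rfl fun c _ ↦ ?_
  rw [sq, ← card_product]
  congr 1
  ext p
  simp only [mem_product, mem_hyperplaneSlice, mem_filter]
  grind

variable [DecidableEq V]

/-- The number of zero-sum triples with one point in each of the slices `φ = a`, `φ = b` and
`φ = c` of `S`. -/
def sliceZeroSumCount (a b c : ZMod 3) : ℕ :=
  #(zeroSumPairs (hyperplaneSlice φ S a) (hyperplaneSlice φ S b) (hyperplaneSlice φ S c))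

lemma sliceZeroSumCount_left_comm (a b c : ZMod 3) :
    sliceZeroSumCount φ S a b c = sliceZeroSumCount φ S b a c :=
  card_zeroSumPairs_left_comm _ _ _

lemma sliceZeroSumCount_right_comm (a b c : ZMod 3) :
    sliceZeroSumCount φ S a b c = sliceZeroSumCount φ S a c b :=
  card_zeroSumPairs_right_comm _ _ _

lemma sum_sliceZeroSumCount_self :
    ∑ c, sliceZeroSumCount φ S c c c = #{p ∈ zeroSumPairs S S S | φ p.1 = φ p.2} := by
  rw [card_eq_sum_card_fiberwise (f := fun p ↦ φ p.1) (t := univ) (by simp)]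
  refine sum_congr rfl fun c _ ↦ ?_
  rw [sliceZeroSumCount]
  congr 1
  ext p
  simp only [mem_zeroSumPairs, mem_hyperplaneSlice, mem_filter, map_sub, map_neg]
  grind [neg_sub_eq_iff_eq (V := ZMod 3)]

lemma card_zeroSumPairs_eq_sum_sum_sliceZeroSumCount :
    #(zeroSumPairs S S S) = ∑ a, ∑ b, sliceZeroSumCount φ S a b (-a - b) := by
  rw [card_eq_sum_card_fiberwise (f := fun p ↦ (φ p.1, φ p.2)) (t := univ) (by simp),
    Fintype.sum_prod_type]
  refine sum_congr rfl fun a _ ↦ sum_congr rfl fun b _ ↦ ?_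
  rw [sliceZeroSumCount]
  congr 1
  ext p
  simp only [mem_zeroSumPairs, mem_hyperplaneSlice, mem_filter, Prod.ext_iff, map_sub, map_neg]
  grind

lemma card_zeroSumPairs_eq_sum_sliceZeroSumCount_self_add :
    #(zeroSumPairs S S S) = ∑ c, sliceZeroSumCount φ S c c c + 6 * sliceZeroSumCount φ S 0 1 2 := by
  rw [card_zeroSumPairs_eq_sum_sum_sliceZeroSumCount φ]
  have hleft := sliceZeroSumCount_left_comm φ S
  have hright := sliceZeroSumCount_right_comm φ S
  generalize sliceZeroSumCount φ S = Z at *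
  have hzero : ∑ b, Z 0 b (-0 - b) = Z 0 0 0 + Z 0 1 2 + Z 0 2 1 := Fin.sum_univ_three _
  have hone : ∑ b, Z 1 b (-1 - b) = Z 1 0 2 + Z 1 1 1 + Z 1 2 0 := Fin.sum_univ_three _
  have htwo : ∑ b, Z 2 b (-2 - b) = Z 2 0 1 + Z 2 1 0 + Z 2 2 2 := Fin.sum_univ_three _
  have hself : ∑ c, Z c c c = Z 0 0 0 + Z 1 1 1 + Z 2 2 2 := Fin.sum_univ_three _
  have hsum : ∑ a, ∑ b, Z a b (-a - b) =
      ∑ b, Z 0 b (-0 - b) + ∑ b, Z 1 b (-1 - b) + ∑ b, Z 2 b (-2 - b) := Fin.sum_univ_three _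
  have h021 : Z 0 2 1 = Z 0 1 2 := hright 0 2 1
  have h102 : Z 1 0 2 = Z 0 1 2 := hleft 1 0 2
  have h120 : Z 1 2 0 = Z 0 1 2 := (hright 1 2 0).trans h102
  have h201 : Z 2 0 1 = Z 0 1 2 := (hleft 2 0 1).trans h021
  have h210 : Z 2 1 0 = Z 0 1 2 := (hright 2 1 0).trans h201
  omega

variable {φ} [Fintype V]

lemma card_mul_add_le_sliceZeroSumCount (hφ : φ ≠ 0) {a b c : ZMod 3} (habc : a + b + c = 0) :
    3 * (#(hyperplaneSlice φ S a) * (#(hyperplaneSlice φ S b) + #(hyperplaneSlice φ S c))) ≤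
      3 * sliceZeroSumCount φ S a b c + #(hyperplaneSlice φ S a) * Fintype.card V := by
  rw [← card_hyperplaneSlice_univ hφ (c := b), mul_left_comm _ 3 #(hyperplaneSlice φ univ b),
    ← mul_add]
  refine Nat.mul_le_mul_left 3
    (card_mul_add_le_card_zeroSumPairs hyperplaneSlice_subset_univ fun x hx z hz ↦ ?_)
  rw [mem_hyperplaneSlice] at hx hz ⊢
  refine ⟨mem_univ _, ?_⟩
  rw [map_sub, map_neg, hx.2, hz.2]
  linear_combination -habc

end Slices

section Dimension

variable {V : Type*} [AddCommGroup V] [Module (ZMod 3) V] [Fintype V] [DecidableEq V]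

lemma minZeroSumPairs_le_sliceZeroSumCount (hV : Fintype.card V = 27) {φ : Module.Dual (ZMod 3) V}
    (hφ : φ ≠ 0) (S : Finset V) (c : ZMod 3) :
    minZeroSumPairs #(hyperplaneSlice φ S c) ≤ sliceZeroSumCount φ S c c c := by
  have hcard : #(hyperplaneSlice φ univ c) = 9 := by
    have := card_hyperplaneSlice_univ hφ (c := c)
    omega
  exact isThirdPointClosed_hyperplaneSlice_univ.minZeroSumPairs_le hcard hyperplaneSlice_subset_univ

lemma sum_erase_zero_card_filter_dual_apply_eq [Fintype (Module.Dual (ZMod 3) V)]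
    [DecidableEq (Module.Dual (ZMod 3) V)] (hV : Fintype.card V = 27)
    (R : Finset (V × V)) :
    ∑ φ ∈ univ.erase (0 : Module.Dual (ZMod 3) V), #{p ∈ R | φ p.1 = φ p.2} =
      8 * #R + 18 * #{p ∈ R | p.1 = p.2} := by
  have hsum := card_mul_sum_card_filter_dual_apply_eq (F := ZMod 3) R
  rw [← add_sum_erase _ _ (mem_univ 0), ← Nat.card_eq_fintype_card (α := Module.Dual _ _),
    card_dual_eq, Nat.card_eq_fintype_card, hV, ZMod.card] at hsum
  simp only [LinearMap.zero_apply, filter_true] at hsum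
  omega

-- The weights are those for which the two sides have the same sum over all `φ ≠ 0`.
lemma exists_sliceZeroSumCount_le (hV : Fintype.card V = 27) (S : Finset V) :
    ∃ φ : Module.Dual (ZMod 3) V, φ ≠ 0 ∧
      12 * #S ^ 2 + 18 * #S + 13 * ∑ c, sliceZeroSumCount φ S c c c ≤
        39 * ∑ c, #(hyperplaneSlice φ S c) ^ 2 + 4 * #(zeroSumPairs S S S) := by
  classical
  have : Finite (Module.Dual (ZMod 3) V) := Module.finite_of_finite (ZMod 3)
  have := Fintype.ofFinite (Module.Dual (ZMod 3) V)
  have hdiag : #{p ∈ S ×ˢ S | p.1 = p.2} = #S := by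
    rw [← diag_eq_filter, diag_card]
  have hcard : #(univ.erase (0 : Module.Dual (ZMod 3) V)) = 26 := by
    rw [card_erase_of_mem (mem_univ _), card_univ, ← Nat.card_eq_fintype_card, card_dual_eq,
      Nat.card_eq_fintype_card, hV]
  obtain ⟨φ, hφ, hle⟩ := exists_le_of_sum_le (s := univ.erase (0 : Module.Dual (ZMod 3) V))
    (f := fun φ ↦ 12 * #S ^ 2 + 18 * #S + 13 * ∑ c, sliceZeroSumCount φ S c c c)
    (g := fun φ ↦ 39 * ∑ c, #(hyperplaneSlice φ S c) ^ 2 + 4 * #(zeroSumPairs S S S))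
    (card_pos.1 (hcard ▸ Nat.zero_lt_succ _)) (by
      simp only [sum_sliceZeroSumCount_self, sum_card_hyperplaneSlice_sq, sum_add_distrib,
        ← mul_sum, sum_erase_zero_card_filter_dual_apply_eq hV, sum_const, hcard, hdiag,
        card_filter_fst_eq_snd_zeroSumPairs, card_product, smul_eq_mul]
      linarith)
  exact ⟨φ, ne_of_mem_erase hφ, hle⟩

end Dimension

section KeyInequality

lemma minZeroSumPairs_dichotomy {a b c : ℕ} (ha : a ≤ 9) (hb : b ≤ 9) (hc : c ≤ 9) :
    19 * (a + b + c) ≤ minZeroSumPairs a + minZeroSumPairs b + minZeroSumPairs c +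
        6 * max (a * (b + c - 9)) (max (b * (a + c - 9)) (c * (a + b - 9))) + 192 ∨
      39 * (a ^ 2 + b ^ 2 + c ^ 2) + 58 * (a + b + c) < 12 * (a + b + c) ^ 2 +
        13 * (minZeroSumPairs a + minZeroSumPairs b + minZeroSumPairs c) + 792 := by
  have hfin : ∀ a b c : Fin 10,
      19 * (a + b + c : ℕ) ≤ minZeroSumPairs a + minZeroSumPairs b + minZeroSumPairs c +
          6 * max (a * (b + c - 9) : ℕ) (max (b * (a + c - 9)) (c * (a + b - 9))) + 192 ∨
        39 * (a ^ 2 + b ^ 2 + c ^ 2 : ℕ) + 58 * (a + b + c : ℕ) < 12 * (a + b + c : ℕ) ^ 2 +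
          13 * (minZeroSumPairs a + minZeroSumPairs b + minZeroSumPairs c) + 792 := by
    decide +kernel
  exact hfin ⟨a, by omega⟩ ⟨b, by omega⟩ ⟨c, by omega⟩

variable {V : Type*} [AddCommGroup V] [Module (ZMod 3) V] [Fintype V] [DecidableEq V]

lemma card_mul_sub_le_sliceZeroSumCount (hV : Fintype.card V = 27) {φ : Module.Dual (ZMod 3) V}
    (hφ : φ ≠ 0) (S : Finset V) {a b c : ZMod 3} (habc : a + b + c = 0) :
    #(hyperplaneSlice φ S a) * (#(hyperplaneSlice φ S b) + #(hyperplaneSlice φ S c) - 9) ≤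
      sliceZeroSumCount φ S a b c := by
  have := card_mul_add_le_sliceZeroSumCount S hφ habc
  rw [hV] at this
  rw [Nat.mul_sub]
  omega

lemma nineteen_mul_card_le_card_zeroSumPairs_add (hV : Fintype.card V = 27) (S : Finset V) :
    19 * #S ≤ #(zeroSumPairs S S S) + 192 := by
  by_contra! hlt
  have hmod : _ % 6 = _ % 6 := card_zeroSumPairs_modEq_six S
  have hgap : #(zeroSumPairs S S S) + 198 ≤ 19 * #S := by omega
  obtain ⟨φ, hφ, havg⟩ := exists_sliceZeroSumCount_le hV S
  have hslice_le (c) : #(hyperplaneSlice φ S c) ≤ 9 := by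
    have := card_le_card (hyperplaneSlice_subset_univ (φ := φ) (S := S) (c := c))
    have := card_hyperplaneSlice_univ hφ (c := c)
    omega
  have hcard : #(hyperplaneSlice φ S 0) + #(hyperplaneSlice φ S 1) + #(hyperplaneSlice φ S 2) =
      #S := (Fin.sum_univ_three _).symm.trans (sum_card_hyperplaneSlice φ S)
  have hmin : minZeroSumPairs #(hyperplaneSlice φ S 0) + minZeroSumPairs #(hyperplaneSlice φ S 1) +
      minZeroSumPairs #(hyperplaneSlice φ S 2) ≤ ∑ c, sliceZeroSumCount φ S c c c :=
    (Fin.sum_univ_three _).symm.trans_le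
      (sum_le_sum fun c _ ↦ minZeroSumPairs_le_sliceZeroSumCount hV hφ S c)
  have hsq : ∑ c, #(hyperplaneSlice φ S c) ^ 2 = #(hyperplaneSlice φ S 0) ^ 2 +
      #(hyperplaneSlice φ S 1) ^ 2 + #(hyperplaneSlice φ S 2) ^ 2 := Fin.sum_univ_three _
  have hsplit := card_zeroSumPairs_eq_sum_sliceZeroSumCount_self_add φ S
  rcases minZeroSumPairs_dichotomy (hslice_le 0) (hslice_le 1) (hslice_le 2) with h | h
  · have hmax : max _ (max _ _) ≤ sliceZeroSumCount φ S 0 1 2 :=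
      max_le (card_mul_sub_le_sliceZeroSumCount hV hφ S rfl) <| max_le
        ((card_mul_sub_le_sliceZeroSumCount hV hφ S rfl).trans_eq
          (sliceZeroSumCount_left_comm φ S 1 0 2))
        ((card_mul_sub_le_sliceZeroSumCount hV hφ S rfl).trans_eq
          ((sliceZeroSumCount_left_comm φ S 2 0 1).trans (sliceZeroSumCount_right_comm φ S 0 2 1)))
    omega
  · rw [hcard] at h
    linarith

end KeyInequality

section Progressions

lemma IsDistinctAP.of_image {G H : Type*} [AddCommGroup G] [AddCommGroup H] (e : G ≃+ H) {k : ℕ}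
    {A : Set G} (h : IsDistinctAP k (e '' A)) : IsDistinctAP k A := by
  obtain ⟨a, d, hmem, hinj⟩ := h
  have hsymm (i : Fin k) : e.symm a + (i : ℕ) • e.symm d = e.symm (a + (i : ℕ) • d) := by
    rw [map_add, map_nsmul]
  refine ⟨e.symm a, e.symm d, fun i ↦ ?_, ?_⟩
  · obtain ⟨x, hx, hxi⟩ := hmem i
    rwa [hsymm, ← hxi, e.symm_apply_apply]
  · simp only [hsymm]
    exact e.symm.injective.comp hinj

variable {U V : Type*} [AddCommGroup U] [AddCommGroup V] [Module (ZMod 2) U] [Module (ZMod 3) V]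

lemma add_nsmul_sub_mem_pair (u v : U) (i : ℕ) : u + i • (v - u) ∈ ({u, v} : Set U) := by
  rw [nsmul_eq_mod_nsmul i (ZModModule.char_nsmul_eq_zero 2 (v - u))]
  have : i % 2 < 2 := Nat.mod_lt _ two_pos
  interval_cases i % 2
  · simp
  · simp

lemma add_nsmul_sub_mem_triple (x y : V) (i : ℕ) :
    x + i • (y - x) ∈ ({x, y, -x - y} : Set V) := by
  rw [nsmul_eq_mod_nsmul i (ZModModule.char_nsmul_eq_zero 3 (y - x))]
  have : i % 3 < 3 := Nat.mod_lt _ three_pos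
  interval_cases i % 3
  · simp
  · simp
  · have hthird : x + 2 • (y - x) = -x - y := by
      rw [← sub_eq_zero, ← ZModModule.char_nsmul_eq_zero 3 y]
      abel
    simp [hthird]

lemma isDistinctAP_six_of_prod_subset {A : Set (U × V)} {u v : U} (huv : u ≠ v) {x y : V}
    (hxy : x ≠ y) (hA : ({u, v} : Set U) ×ˢ {x, y, -x - y} ⊆ A) : IsDistinctAP 6 A := by
  have horder : addOrderOf (v - u, y - x) = 6 := by
    rw [Prod.addOrderOf_mk,
      addOrderOf_eq_prime (ZModModule.char_nsmul_eq_zero 2 _) (sub_ne_zero.2 huv.symm),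
      addOrderOf_eq_prime (ZModModule.char_nsmul_eq_zero 3 _) (sub_ne_zero.2 hxy.symm)]
    rfl
  refine ⟨(u, x), (v - u, y - x), fun i ↦ hA ?_, fun i j hij ↦ ?_⟩
  · exact ⟨add_nsmul_sub_mem_pair u v i, add_nsmul_sub_mem_triple x y i⟩
  · refine Fin.ext (nsmul_injOn_Iio_addOrderOf ?_ ?_ (add_left_cancel hij)) <;>
      simp only [horder, Set.mem_Iio, Fin.is_lt]

end Progressions

section Fibers

variable {U V : Type*} [Fintype V] [DecidableEq U] [DecidableEq V]

/-- The fiber `{x | (u, x) ∈ A}` of `A` over `u`. -/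
def fiberOver (A : Finset (U × V)) (u : U) : Finset V :=
  {x | (u, x) ∈ A}

lemma mem_fiberOver {A : Finset (U × V)} {u : U} {x : V} : x ∈ fiberOver A u ↔ (u, x) ∈ A := by
  simp only [fiberOver, mem_filter, mem_univ, true_and]

variable [Fintype U]

lemma sum_card_fiberOver (A : Finset (U × V)) : ∑ u, #(fiberOver A u) = #A := by
  simp only [fiberOver, card_filter]
  rw [← Fintype.sum_prod_type', ← card_filter, filter_univ_mem]

end Fibers

section Counting

variable {U V : Type*} [AddCommGroup U] [AddCommGroup V] [Module (ZMod 2) U] [Module (ZMod 3) V]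
  [Fintype U] [Fintype V] {A : Finset (U × V)}

lemma sum_card_filter_ne_zeroSumPairs_fiberOver_le [DecidableEq U] [DecidableEq V]
    (hA : ¬ IsDistinctAP 6 (A : Set (U × V))) :
    ∑ u, #{p ∈ zeroSumPairs (fiberOver A u) (fiberOver A u) (fiberOver A u) | p.1 ≠ p.2} ≤
      Fintype.card V * (Fintype.card V - 1) := by
  rw [← card_biUnion]
  · calc
      _ ≤ #(univ : Finset V).offDiag := card_le_card fun p hp ↦ by
        obtain ⟨u, -, hp⟩ := mem_biUnion.1 hp
        simpa using (mem_filter.1 hp).2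
      _ = _ := by rw [offDiag_card, card_univ, Nat.mul_sub_one]
  · refine fun u _ v _ huv ↦ disjoint_left.2 fun p hpu hpv ↦ hA ?_
    simp only [mem_filter, mem_zeroSumPairs, mem_fiberOver] at hpu hpv
    refine isDistinctAP_six_of_prod_subset huv hpu.2 ?_
    rintro ⟨w, z⟩ ⟨rfl | rfl, rfl | rfl | rfl⟩ <;> simp_all

lemma sum_card_zeroSumPairs_fiberOver_le [DecidableEq U] [DecidableEq V]
    (hA : ¬ IsDistinctAP 6 (A : Set (U × V))) :
    ∑ u, #(zeroSumPairs (fiberOver A u) (fiberOver A u) (fiberOver A u)) ≤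
      #A + Fintype.card V * (Fintype.card V - 1) := by
  simp only [← card_filter_add_card_filter_not (s := zeroSumPairs _ _ _) (fun p ↦ p.1 = p.2),
    card_filter_fst_eq_snd_zeroSumPairs, sum_add_distrib, sum_card_fiberOver]
  exact Nat.add_le_add_left (sum_card_filter_ne_zeroSumPairs_fiberOver_le hA) _

lemma eighteen_mul_card_le_of_not_isDistinctAP_six (hV : Fintype.card V = 27)
    (hA : ¬ IsDistinctAP 6 (A : Set (U × V))) : 18 * #A ≤ 702 + 192 * Fintype.card U := by
  classical
  have hfibers : ∑ u, 19 * #(fiberOver A u) ≤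
      ∑ u, (#(zeroSumPairs (fiberOver A u) (fiberOver A u) (fiberOver A u)) + 192) :=
    sum_le_sum fun u _ ↦ nineteen_mul_card_le_card_zeroSumPairs_add hV (fiberOver A u)
  rw [← mul_sum, sum_card_fiberOver, sum_add_distrib, sum_const, card_univ, smul_eq_mul]
    at hfibers
  have hcount := sum_card_zeroSumPairs_fiberOver_le hA
  rw [hV] at hcount
  omega

end Counting

/-- The Chinese remainder isomorphism `(ℤ/mnℤ)^ι ≃ (ℤ/mℤ)^ι × (ℤ/nℤ)^ι`, coordinatewise. -/
def piChineseRemainder (ι : Type*) {m n : ℕ} (h : m.Coprime n) :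
    (ι → ZMod (m * n)) ≃+ (ι → ZMod m) × (ι → ZMod n) where
  toEquiv := (Equiv.piCongrRight fun _ ↦ (ZMod.chineseRemainder h).toEquiv).trans
    (Equiv.arrowProdEquivProdArrow ι _ _)
  map_add' x y := by
    ext i <;> simp

theorem r6_Z6_three_upper : rAP 6 6 3 ≤ 124 := by
  refine csSup_le' ?_
  rintro _ ⟨A, hA, rfl⟩
  let e : (Fin 3 → ZMod 6) ≃+ (Fin 3 → ZMod 2) × (Fin 3 → ZMod 3) :=
    piChineseRemainder (Fin 3) (m := 2) (n := 3) (by decide)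
  have himage : ¬ IsDistinctAP 6
      (A.map e.toEquiv.toEmbedding : Set ((Fin 3 → ZMod 2) × (Fin 3 → ZMod 3))) := by
    rw [coe_map]
    exact mt (IsDistinctAP.of_image e) hA
  have hbound := eighteen_mul_card_le_of_not_isDistinctAP_six (by simp) himage
  rw [card_map, Fintype.card_pi_const, ZMod.card] at hbound
  omega
end

section
/- There exists N such that for all n ≥ N, r_6(ℤ_6^n) ≤ 5.709^n; i.e., for all sufficiently large n, every subset of (ℤ/6ℤ)^n containing no 6-term arithmetic progression of pairwise distinct elements has size at most 5.709^n. -/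
/-!
By the Chinese remainder theorem, `(ℤ/6ℤ)ⁿ` is `V × K` with `V = 𝔽₂ⁿ` and `K` the field of `3ⁿ`
elements. If two fibers of `A` above distinct points `a, b : V` contain the same nontrivial
progression `x, x + d, x + 2d`, then the multiples of `(b - a, d)` added to `(a, x)` form a
progression of six distinct elements of `A`. So if `A` has none, the fibers contain at most `9ⁿ`
nontrivial three-term progressions in total. On the other hand, if `A` is large, then so is the
average fiber, and averaging the cap set bound of Ellenberg and Gijswijt over random affine copies
of `𝔽₃ᵐ` in `K` (the maps `x ↦ v + t * f x` with `f` an injection of `𝔽₃ᵐ` into `K`) produces many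
such progressions. The choice `m / n ≈ 24 / 41` balances the two sides.
-/

open Asymptotics Finset Module

section DiagonalTensor

variable {F ι P : Type*} [Field F] [Fintype ι]

theorem exists_mem_finrank_le_card_support [DecidableEq F] (V : Submodule F (ι → F)) :
    ∃ a ∈ V, finrank F V ≤ #{i | a i ≠ 0} := by
  let supportCards : Set ℕ := (fun a : ι → F => #{i | a i ≠ 0}) '' V
  have hbdd : supportCards.Finite :=
    (Set.finite_Iic (Fintype.card ι)).subset (by rintro _ ⟨a, -, rfl⟩; exact card_le_univ _)
  obtain ⟨_, ⟨a, haV, rfl⟩, hmax⟩ := hbdd.exists_maximal ⟨_, 0, V.zero_mem, rfl⟩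
  refine ⟨a, haV, ?_⟩
  by_contra! hlt
  let restrict : V →ₗ[F] ({i // a i ≠ 0} → F) :=
    (LinearMap.funLeft F F Subtype.val).comp V.subtype
  obtain ⟨b, hb, hb0⟩ := Submodule.exists_mem_ne_zero_of_ne_bot
    (LinearMap.ker_ne_bot_of_finrank_lt (f := restrict) (by simpa [Fintype.card_subtype] using hlt))
  have hb_zero : ∀ i, a i ≠ 0 → b.1 i = 0 := fun i hi =>
    congrFun (LinearMap.mem_ker.1 hb) ⟨i, hi⟩
  obtain ⟨j, hbj⟩ : ∃ j, b.1 j ≠ 0 := Function.ne_iff.1 (Subtype.coe_ne_coe.2 hb0)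
  have haj : a j = 0 := not_not.1 fun h => hbj (hb_zero j h)
  have hssub : univ.filter (fun i => a i ≠ 0) ⊂ univ.filter fun i => (a + b.1) i ≠ 0 := by
    refine (ssubset_iff_of_subset fun i hi => ?_).2 ⟨j, by simp [haj, hbj], by simp [haj]⟩
    simp only [mem_filter_univ] at hi ⊢
    simpa [hb_zero i hi] using hi
  have hlarger := card_lt_card hssub
  exact hlarger.not_ge (hmax ⟨a + b.1, V.add_mem haV b.2, rfl⟩ hlarger.le)

theorem finrank_add_card_support_le [DecidableEq F] {U V : Submodule F (ι → F)} {a : ι → F}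
    (h : ∀ b ∈ V, a * b ∈ U) :
    finrank F V + #{i | a i ≠ 0} ≤ finrank F U + Fintype.card ι := by
  let φ : V →ₗ[F] U × ({i // a i = 0} → F) :=
    (((LinearMap.mulLeft F a).comp V.subtype).codRestrict U fun b => h b b.2).prod
      ((LinearMap.funLeft F F Subtype.val).comp V.subtype)
  have hφ : Function.Injective φ := by
    intro b c hbc
    ext i
    by_cases hi : a i = 0
    · exact congrFun (congrArg Prod.snd hbc) ⟨i, hi⟩
    · exact mul_left_cancel₀ hi (congrFun (congrArg (fun x => (x.1 : ι → F)) hbc) i)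
  have hrank := LinearMap.finrank_le_finrank_of_injective hφ
  rw [finrank_prod, finrank_fintype_fun_eq_card, Fintype.card_subtype] at hrank
  have hcard : #{i | a i = 0} + #{i | a i ≠ 0} = Fintype.card ι :=
    card_filter_add_card_filter_not _
  omega

variable [DecidableEq ι]

/-- The orthogonal complement of a subspace of `ι → F` with respect to the dot product. -/
def dotOrthogonal (W : Submodule F (ι → F)) : Submodule F (ι → F) :=
  W.dualAnnihilator.comap (dotProductEquiv F ι).toLinearMap

theorem mem_dotOrthogonal {W : Submodule F (ι → F)} {a : ι → F} :
    a ∈ dotOrthogonal W ↔ ∀ w ∈ W, a ⬝ᵥ w = 0 := by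
  simp [dotOrthogonal, Submodule.mem_dualAnnihilator]

theorem finrank_add_finrank_dotOrthogonal (W : Submodule F (ι → F)) :
    finrank F W + finrank F (dotOrthogonal W) = Fintype.card ι := by
  have hcomap : finrank F (dotOrthogonal W) = finrank F W.dualAnnihilator := by
    rw [dotOrthogonal, Submodule.comap_equiv_eq_map_symm, LinearEquiv.finrank_map_eq]
  rw [hcomap, Subspace.finrank_add_finrank_dualAnnihilator_eq, finrank_fintype_fun_eq_card]

theorem mul_eq_sum_smul_of_diagonal {s : Finset P} {u v w : P → ι → F}
    (hdiag : ∀ i j k, ∑ p ∈ s, u p i * v p j * w p k = if i = j ∧ j = k then 1 else 0)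
    (a b : ι → F) : a * b = ∑ p ∈ s, ((b ⬝ᵥ v p) * (a ⬝ᵥ w p)) • u p := by
  ext i
  calc (a * b) i
      = ∑ j, ∑ k, b j * a k * if i = j ∧ j = k then 1 else 0 := by
        simp [ite_and, mul_comm]
    _ = ∑ j, ∑ k, ∑ p ∈ s, b j * a k * (u p i * v p j * w p k) := by
        simp only [← hdiag, mul_sum]
    _ = ∑ p ∈ s, ∑ j, ∑ k, b j * a k * (u p i * v p j * w p k) := by
        simp only [sum_comm (s := univ) (t := s)]
    _ = (∑ p ∈ s, ((b ⬝ᵥ v p) * (a ⬝ᵥ w p)) • u p) i := by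
        simp only [Finset.sum_apply, Pi.smul_apply, smul_eq_mul, dotProduct]
        refine sum_congr rfl fun p _ => ?_
        rw [sum_mul_sum, sum_mul]
        refine sum_congr rfl fun j _ => ?_
        rw [sum_mul]
        exact sum_congr rfl fun k _ => by ring

/-- Tao's slice rank bound: contracting the diagonal tensor with a vector `a` orthogonal to `W`
gives the diagonal matrix with entries `a i`, so it suffices that some such `a` has large
support. -/
theorem card_le_finrank_of_diagonal {s : Finset P} {u v w : P → ι → F}
    {U V W : Submodule F (ι → F)} (hmem : ∀ p ∈ s, u p ∈ U ∨ v p ∈ V ∨ w p ∈ W)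
    (hdiag : ∀ i j k, ∑ p ∈ s, u p i * v p j * w p k = if i = j ∧ j = k then 1 else 0) :
    Fintype.card ι ≤ finrank F U + finrank F V + finrank F W := by
  classical
  obtain ⟨a, haW, hsupport⟩ := exists_mem_finrank_le_card_support (dotOrthogonal W)
  rw [mem_dotOrthogonal] at haW
  have hmul : ∀ b ∈ dotOrthogonal V, a * b ∈ U := by
    intro b hbV
    rw [mem_dotOrthogonal] at hbV
    rw [mul_eq_sum_smul_of_diagonal hdiag]
    refine U.sum_mem fun p hp => ?_
    rcases hmem p hp with hu | hv | hw
    · exact U.smul_mem _ hu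
    · simp [hbV _ hv]
    · simp [haW _ hw]
  have hle := finrank_add_card_support_le hmul
  have hV := finrank_add_finrank_dotOrthogonal V
  have hW := finrank_add_finrank_dotOrthogonal W
  omega

end DiagonalTensor

section LowDegree

/-- The exponent vectors of the monomials in `n` variables of total degree at most `D` in which
every variable has degree less than `q`. -/
def lowDegreeExponents (q n D : ℕ) : Finset (Fin n → ℕ) :=
  {e ∈ Fintype.piFinset fun _ => range q | ∑ i, e i ≤ D}

theorem card_lowDegreeExponents_mul_pow_le (q n D : ℕ) {s : ℝ} (hs₀ : 0 ≤ s) (hs₁ : s ≤ 1) :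
    #(lowDegreeExponents q n D) * s ^ D ≤ (∑ j ∈ range q, s ^ j) ^ n :=
  calc #(lowDegreeExponents q n D) * s ^ D
      = ∑ _e ∈ lowDegreeExponents q n D, s ^ D := by rw [sum_const, nsmul_eq_mul]
    _ ≤ ∑ e ∈ lowDegreeExponents q n D, s ^ ∑ i, e i :=
        sum_le_sum fun e he => pow_le_pow_of_le_one hs₀ hs₁ (mem_filter.1 he).2
    _ ≤ ∑ e ∈ Fintype.piFinset fun _ : Fin n => range q, s ^ ∑ i, e i :=
        sum_le_sum_of_subset_of_nonneg (filter_subset _ _) fun e _ _ => by positivity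
    _ = ∑ e ∈ Fintype.piFinset fun _ : Fin n => range q, ∏ i, s ^ e i := by
        simp only [prod_pow_eq_pow_sum]
    _ = (∑ j ∈ range q, s ^ j) ^ n := by
        rw [← prod_univ_sum, prod_const, card_univ, Fintype.card_fin]

/-- The space of functions on the index set of a family of points `x i` that are polynomials in
`x i` with exponent vectors in `E`. -/
def monomialSpan {F ι : Type*} [Field F] {n : ℕ} (E : Finset (Fin n → ℕ)) (x : ι → Fin n → F) :
    Submodule F (ι → F) :=
  Submodule.span F (Set.range fun (e : E) i => ∏ k, x i k ^ e.1 k)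

variable {F ι : Type*} [Field F] {n : ℕ} {E : Finset (Fin n → ℕ)}

theorem monomial_mem_monomialSpan {e : Fin n → ℕ} (he : e ∈ E) (x : ι → Fin n → F) :
    (fun i => ∏ k, x i k ^ e k) ∈ monomialSpan E x :=
  Submodule.subset_span ⟨⟨e, he⟩, rfl⟩

theorem finrank_monomialSpan_le (E : Finset (Fin n → ℕ)) (x : ι → Fin n → F) :
    finrank F (monomialSpan E x) ≤ #E :=
  (finrank_range_le_card _).trans (Fintype.card_coe E).le

end LowDegree

section CapSet

variable {F σ ι : Type*} [Field F] [Fintype F] [Fintype σ] {n : ℕ}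

/-- The polynomial `1 - (∑ i, X i) ^ (q - 1)` over the field of `q` elements, which by Fermat's
little theorem is the indicator function of the hyperplane `∑ i, x i = 0`. -/
noncomputable def sumZeroPolynomial (F σ : Type*) [Field F] [Fintype F] [Fintype σ] :
    MvPolynomial σ F :=
  1 - (∑ i, MvPolynomial.X i) ^ (Fintype.card F - 1)

theorem eval_sumZeroPolynomial [DecidableEq F] (x : σ → F) :
    MvPolynomial.eval x (sumZeroPolynomial F σ) = if ∑ i, x i = 0 then 1 else 0 := by
  have hq : Fintype.card F - 1 ≠ 0 := Nat.sub_ne_zero_of_lt Fintype.one_lt_card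
  split_ifs with hx
  · simp [sumZeroPolynomial, hx, hq]
  · simp [sumZeroPolynomial, FiniteField.pow_card_sub_one_eq_one _ hx]

theorem totalDegree_sumZeroPolynomial_le :
    (sumZeroPolynomial F σ).totalDegree ≤ Fintype.card F - 1 := by
  have hsum : (∑ i : σ, (MvPolynomial.X i : MvPolynomial σ F)).totalDegree ≤ 1 :=
    MvPolynomial.totalDegree_finsetSum_le fun i _ => (MvPolynomial.totalDegree_X i).le
  refine (MvPolynomial.totalDegree_sub _ _).trans (max_le (by simp) ?_)
  exact (MvPolynomial.totalDegree_pow _ _).trans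
    ((Nat.mul_le_mul_left _ hsum).trans (mul_one _).le)

theorem sum_le_of_mem_support_sumZeroPolynomial {d : σ →₀ ℕ}
    (hd : d ∈ (sumZeroPolynomial F σ).support) : ∑ i, d i ≤ Fintype.card F - 1 := by
  rw [← d.sum_fintype (fun _ e => e) fun _ => rfl]
  exact (MvPolynomial.le_totalDegree hd).trans totalDegree_sumZeroPolynomial_le

theorem sum_eq_zero_indicator_eq_sum_monomials [DecidableEq F] (x : σ → Fin n → F) :
    (if ∑ j, x j = 0 then 1 else 0 : F) =
      ∑ p ∈ Fintype.piFinset fun _ : Fin n => (sumZeroPolynomial F σ).support,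
        (∏ i, (sumZeroPolynomial F σ).coeff (p i)) * ∏ j, ∏ i, x j i ^ p i j :=
  calc (if ∑ j, x j = 0 then 1 else 0 : F)
      = ∏ i, if ∑ j, x j i = 0 then 1 else 0 := by
        simp [prod_ite_zero, funext_iff]
    _ = ∏ i, ∑ d ∈ (sumZeroPolynomial F σ).support,
          (sumZeroPolynomial F σ).coeff d * ∏ j, x j i ^ d j := by
        simp only [← eval_sumZeroPolynomial, MvPolynomial.eval_eq']
    _ = _ := by
        simp only [prod_univ_sum, prod_mul_distrib]
        exact sum_congr rfl fun p _ => by rw [prod_comm]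

theorem exists_mem_lowDegreeExponents [Nonempty σ] {p : Fin n → σ →₀ ℕ}
    (hp : p ∈ Fintype.piFinset fun _ => (sumZeroPolynomial F σ).support) :
    ∃ j, (fun i => p i j) ∈
      lowDegreeExponents (Fintype.card F) n ((Fintype.card F - 1) * n / Fintype.card σ) := by
  have hdeg : ∀ i, ∑ j, p i j ≤ Fintype.card F - 1 := fun i =>
    sum_le_of_mem_support_sumZeroPolynomial (Fintype.mem_piFinset.1 hp i)
  have htotal : ∑ j, ∑ i, p i j ≤ (Fintype.card F - 1) * n := by
    rw [sum_comm]
    simpa [mul_comm] using sum_le_card_nsmul univ _ _ fun i _ => hdeg i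
  obtain ⟨j, -, hj⟩ : ∃ j ∈ (univ : Finset σ),
      (∑ i, p i j) * Fintype.card σ ≤ (Fintype.card F - 1) * n := by
    refine exists_le_of_sum_le univ_nonempty ?_
    rw [← sum_mul, sum_const, card_univ, smul_eq_mul, mul_comm]
    gcongr
  refine ⟨j, mem_filter.2 ⟨Fintype.mem_piFinset.2 fun i => mem_range.2 ?_,
    (Nat.le_div_iff_mul_le Fintype.card_pos).2 hj⟩⟩
  have hij : p i j ≤ ∑ j, p i j := single_le_sum_of_canonicallyOrdered (mem_univ j)
  have hpos : 0 < Fintype.card F := Fintype.card_pos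
  have := hdeg i
  omega

/-- The Ellenberg–Gijswijt bound for tricolored sum-free sets. -/
theorem card_le_of_tricolored_sum_free [Fintype ι] {x y z : ι → Fin n → F}
    (h : ∀ i j k, x i + y j + z k = 0 ↔ i = j ∧ j = k) :
    Fintype.card ι ≤
      3 * #(lowDegreeExponents (Fintype.card F) n ((Fintype.card F - 1) * n / 3)) := by
  classical
  set E := lowDegreeExponents (Fintype.card F) n ((Fintype.card F - 1) * n / 3)
  let c (p : Fin n → Fin 3 →₀ ℕ) : F := ∏ i, (sumZeroPolynomial F (Fin 3)).coeff (p i)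
  have hdiag (i j k : ι) :
      ∑ p ∈ Fintype.piFinset fun _ : Fin n => (sumZeroPolynomial F (Fin 3)).support,
        (c p * ∏ l, x i l ^ p l 0) * (∏ l, y j l ^ p l 1) * ∏ l, z k l ^ p l 2 =
      if i = j ∧ j = k then 1 else 0 := by
    simpa [Fin.sum_univ_three, Fin.prod_univ_three, h, c, mul_assoc] using
      (sum_eq_zero_indicator_eq_sum_monomials ![x i, y j, z k]).symm
  have hbound := card_le_finrank_of_diagonal
    (U := monomialSpan E x) (V := monomialSpan E y) (W := monomialSpan E z) (fun p hp => ?_) hdiag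
  · have hx := finrank_monomialSpan_le E x
    have hy := finrank_monomialSpan_le E y
    have hz := finrank_monomialSpan_le E z
    omega
  · obtain ⟨j, hj⟩ := exists_mem_lowDegreeExponents hp
    rw [Fintype.card_fin] at hj
    fin_cases j
    · exact .inl (Submodule.smul_mem _ (c p) (monomial_mem_monomialSpan hj x))
    · exact .inr (.inl (monomial_mem_monomialSpan hj y))
    · exact .inr (.inr (monomial_mem_monomialSpan hj z))

theorem addRothNumber_univ_le_card_lowDegreeExponents [DecidableEq F] :
    addRothNumber (univ : Finset (Fin n → F)) ≤
      3 * #(lowDegreeExponents (Fintype.card F) n ((Fintype.card F - 1) * n / 3)) := by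
  obtain ⟨S, -, hcard, hfree⟩ := addRothNumber_spec (univ : Finset (Fin n → F))
  rw [← hcard, ← Fintype.card_coe S]
  refine card_le_of_tricolored_sum_free
    (x := fun a : S => a.1) (y := fun b => -(b.1 + b.1)) (z := fun c => c.1) fun a b c => ?_
  have hAP : a.1 + -(b.1 + b.1) + c.1 = 0 ↔ a.1 + c.1 = b.1 + b.1 := by
    rw [← sub_eq_add_neg, sub_add_eq_add_sub, sub_eq_zero]
  rw [hAP]
  constructor
  · intro hsum
    have hab : a = b := Subtype.ext (hfree a.2 b.2 c.2 hsum)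
    exact ⟨hab, Subtype.ext (add_left_cancel (hab ▸ hsum)).symm⟩
  · rintro ⟨rfl, rfl⟩
    rfl

end CapSet

section Supersaturation

variable {G H K I : Type*}

/-- The nontrivial three-term progressions `x, x + d, x + 2d` in `B`, encoded as pairs `(x, d)` with
`d ≠ 0`. The terms need not be distinct: `x + 2d = x` is allowed. -/
def threeAPs [AddCommGroup G] [Fintype G] [DecidableEq G] (B : Finset G) : Finset (G × G) :=
  {q | q.2 ≠ 0 ∧ q.1 ∈ B ∧ q.1 + q.2 ∈ B ∧ q.1 + 2 • q.2 ∈ B}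

theorem mem_threeAPs [AddCommGroup G] [Fintype G] [DecidableEq G] {B : Finset G} {x d : G} :
    (x, d) ∈ threeAPs B ↔ d ≠ 0 ∧ x ∈ B ∧ x + d ∈ B ∧ x + 2 • d ∈ B := by
  simp [threeAPs]

theorem card_le_addRothNumber_add_card_threeAPs [AddCommGroup G] [Fintype G] [DecidableEq G]
    (B : Finset G) : #B ≤ addRothNumber B + #(threeAPs B) := by
  set firstTerms := (threeAPs B).image Prod.fst
  have hfree : ThreeAPFree ((B \ firstTerms : Finset G) : Set G) := by
    intro a ha b hb c hc habc
    simp only [coe_sdiff, Set.mem_sdiff, mem_coe] at ha hb hc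
    by_contra hab
    have hc_eq : a + 2 • (b - a) = c := by
      rw [eq_sub_of_add_eq' habc]
      abel
    refine ha.2 (mem_image.2 ⟨(a, b - a), mem_threeAPs.2 ?_, rfl⟩)
    exact ⟨sub_ne_zero.2 (Ne.symm hab), ha.1, by simpa using hb.1, hc_eq ▸ hc.1⟩
  calc #B ≤ #(B \ firstTerms) + #firstTerms := card_le_card_sdiff_add_card
    _ ≤ addRothNumber B + #(threeAPs B) :=
        add_le_add (hfree.le_addRothNumber sdiff_subset) card_image_le

variable [AddCommGroup H] [Fintype H] [Field K] [Fintype K] [DecidableEq K]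

/-- The preimage of `A` under the affine map `x ↦ v + t * f x` with parameters `s = (t, v)`. -/
def affinePreimage (f : H →+ K) (A : Finset K) (s : K × K) : Finset H :=
  {x | s.2 + s.1 * f x ∈ A}

theorem sum_card_affinePreimage (f : H →+ K) (A : Finset K) :
    ∑ s, #(affinePreimage f A s) = Fintype.card K * (Fintype.card H * #A) := by
  have htranslate (t : K) (x : H) : #{v | v + t * f x ∈ A} = #A :=
    card_equiv (Equiv.addRight (t * f x)) (by simp)
  calc ∑ s, #(affinePreimage f A s)
      = ∑ t, ∑ v, ∑ x, if v + t * f x ∈ A then 1 else 0 := by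
        simp only [Fintype.sum_prod_type, affinePreimage, card_filter]
    _ = ∑ t, ∑ x, #{v | v + t * f x ∈ A} := by
        simp only [card_filter]
        exact sum_congr rfl fun t _ => sum_comm
    _ = Fintype.card K * (Fintype.card H * #A) := by
        simp [htranslate]

variable [DecidableEq H]

theorem card_filter_mem_threeAPs_affinePreimage_le {f : H →+ K} (hf : Function.Injective f)
    (A : Finset K) (q : H × H) :
    #{s | q ∈ threeAPs (affinePreimage f A s)} ≤ #A + #(threeAPs A) := by
  obtain ⟨x, d⟩ := q
  rcases eq_or_ne d 0 with rfl | hd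
  · simp [mem_threeAPs]
  have hfd : f d ≠ 0 := (map_ne_zero_iff f hf).2 hd
  let image (s : K × K) : K × K := (s.2 + s.1 * f x, s.1 * f d)
  have hinj : Function.Injective image := by
    rintro ⟨t, v⟩ ⟨t', v'⟩ h
    simp only [image, Prod.mk.injEq] at h
    obtain rfl := mul_right_cancel₀ hfd h.2
    simpa using h.1
  have hmaps : ∀ s ∈ univ.filter fun s => (x, d) ∈ threeAPs (affinePreimage f A s),
      image s ∈ A ×ˢ {0} ∪ threeAPs A := by
    rintro ⟨t, v⟩ hs
    simp only [mem_filter_univ, mem_threeAPs, affinePreimage, map_add, map_nsmul, mul_add,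
      mul_smul_comm, ← add_assoc] at hs
    by_cases hstep : t * f d = 0
    · simp [image, hstep, hs.2.1]
    · exact mem_union_right _ (mem_threeAPs.2 ⟨hstep, hs.2⟩)
  calc #{s | (x, d) ∈ threeAPs (affinePreimage f A s)}
      ≤ #(A ×ˢ {0} ∪ threeAPs A) := card_le_card_of_injOn image hmaps hinj.injOn
    _ ≤ #A + #(threeAPs A) := (card_union_le _ _).trans (by simp)

/-- Varnavides averaging over the affine maps `x ↦ v + t * f x` with `t, v : K`. -/
theorem card_mul_card_mul_card_le_addRothNumber_add_threeAPs {f : H →+ K}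
    (hf : Function.Injective f) (A : Finset K) :
    Fintype.card K * (Fintype.card H * #A) ≤
      Fintype.card K ^ 2 * addRothNumber (univ : Finset H) +
        Fintype.card H ^ 2 * (#A + #(threeAPs A)) := by
  have hcount : ∑ s, #(threeAPs (affinePreimage f A s)) ≤
      Fintype.card H ^ 2 * (#A + #(threeAPs A)) :=
    calc ∑ s, #(threeAPs (affinePreimage f A s))
        = ∑ q, #{s | q ∈ threeAPs (affinePreimage f A s)} := by
          simpa [bipartiteAbove, bipartiteBelow] using
            sum_card_bipartiteAbove_eq_sum_card_bipartiteBelow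
              (s := univ) (t := univ) fun s q => q ∈ threeAPs (affinePreimage f A s)
      _ ≤ ∑ _q : H × H, (#A + #(threeAPs A)) :=
          sum_le_sum fun q _ => card_filter_mem_threeAPs_affinePreimage_le hf A q
      _ = Fintype.card H ^ 2 * (#A + #(threeAPs A)) := by simp [sq]
  calc Fintype.card K * (Fintype.card H * #A)
      = ∑ s, #(affinePreimage f A s) := (sum_card_affinePreimage f A).symm
    _ ≤ ∑ s, (addRothNumber univ + #(threeAPs (affinePreimage f A s))) :=
        sum_le_sum fun s _ => (card_le_addRothNumber_add_card_threeAPs _).trans <| by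
          gcongr; exact subset_univ _
    _ = Fintype.card K ^ 2 * addRothNumber (univ : Finset H) +
          ∑ s, #(threeAPs (affinePreimage f A s)) := by
        simp [sum_add_distrib, sq]
    _ ≤ _ := by gcongr

theorem card_mul_sum_card_le_of_disjoint_threeAPs [Fintype I] {f : H →+ K}
    (hf : Function.Injective f) {A : I → Finset K}
    (hA : Pairwise fun a b => Disjoint (threeAPs (A a)) (threeAPs (A b))) :
    Fintype.card H * ∑ a, #(A a) ≤
      Fintype.card I * Fintype.card K * addRothNumber (univ : Finset H) +
        Fintype.card H ^ 2 * (Fintype.card I + Fintype.card K) := by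
  have hAPs : ∑ a, #(threeAPs (A a)) ≤ Fintype.card K * Fintype.card K := by
    rw [← card_biUnion fun a _ b _ hab => hA hab, ← Fintype.card_prod]
    exact card_le_univ _
  have hpoints : ∑ a, #(A a) ≤ Fintype.card K * Fintype.card I := by
    simpa [mul_comm] using sum_le_card_nsmul univ _ _ fun a _ => card_le_univ (A a)
  have hsum := sum_le_sum fun a (_ : a ∈ univ) =>
    card_mul_card_mul_card_le_addRothNumber_add_threeAPs hf (A a)
  simp only [← mul_sum, sum_add_distrib, sum_const, card_univ, smul_eq_mul] at hsum
  refine le_of_mul_le_mul_left ?_ (Fintype.card_pos (α := K))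
  calc _ ≤ _ := hsum
    _ ≤ Fintype.card K ^ 2 * (Fintype.card I * addRothNumber (univ : Finset H)) +
          Fintype.card H ^ 2 *
            (Fintype.card K * Fintype.card I + Fintype.card K * Fintype.card K) := by gcongr
    _ = _ := by ring

end Supersaturation

section SixAP

theorem IsDistinctAP.image {G H : Type*} [AddCommGroup G] [AddCommGroup H] {k : ℕ} {A : Set G}
    (hA : IsDistinctAP k A) {f : G →+ H} (hf : Function.Injective f) :
    IsDistinctAP k (f '' A) := by
  obtain ⟨a, d, hmem, hinj⟩ := hA
  refine ⟨f a, f d, fun i => ⟨_, hmem i, by simp⟩, fun i j hij => hinj (hf ?_)⟩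
  simpa using hij

theorem nsmul_eq_zero_or_self {V : Type*} [AddCommGroup V] [Module (ZMod 2) V] (i : ℕ) (v : V) :
    i • v = 0 ∨ i • v = v := by
  rw [nsmul_eq_mod_nsmul i (ZModModule.char_nsmul_eq_zero 2 v)]
  rcases Nat.mod_two_eq_zero_or_one i with h | h <;> simp [h]

theorem nsmul_eq_zero_or_self_or_two_nsmul {W : Type*} [AddCommGroup W] [Module (ZMod 3) W]
    (i : ℕ) (w : W) : i • w = 0 ∨ i • w = w ∨ i • w = 2 • w := by
  rw [nsmul_eq_mod_nsmul i (ZModModule.char_nsmul_eq_zero 3 w)]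
  have hlt : i % 3 < 3 := Nat.mod_lt _ three_pos
  interval_cases i % 3 <;> simp

theorem addOrderOf_mk_eq_six {V W : Type*} [AddCommGroup V] [AddCommGroup W] [Module (ZMod 2) V]
    [Module (ZMod 3) W] {v : V} {w : W} (hv : v ≠ 0) (hw : w ≠ 0) : addOrderOf (v, w) = 6 := by
  rw [Prod.addOrderOf_mk, addOrderOf_eq_prime (ZModModule.char_nsmul_eq_zero 2 v) hv,
    addOrderOf_eq_prime (ZModModule.char_nsmul_eq_zero 3 w) hw]
  rfl

/-- The fiber of `A` above `a`. -/
def fiber {V W : Type*} [DecidableEq V] [DecidableEq W] [Fintype W] (A : Finset (V × W)) (a : V) :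
    Finset W :=
  {y | (a, y) ∈ A}

variable {V W : Type*}

theorem sum_card_fiber [Fintype V] [DecidableEq V] [Fintype W] [DecidableEq W]
    (A : Finset (V × W)) : ∑ a, #(fiber A a) = #A := by
  simp only [fiber, card_filter]
  rw [← Fintype.sum_prod_type']
  simp

variable [AddCommGroup V] [Module (ZMod 2) V]

theorem pairwise_disjoint_threeAPs_fiber [DecidableEq V] [AddCommGroup W] [Fintype W]
    [DecidableEq W] [Module (ZMod 3) W] {A : Finset (V × W)}
    (hA : ¬ IsDistinctAP 6 (A : Set (V × W))) :
    Pairwise fun a b => Disjoint (threeAPs (fiber A a)) (threeAPs (fiber A b)) := by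
  intro a b hab
  refine disjoint_left.2 fun ⟨y, d⟩ ha hb => hA ⟨(a, y), (b - a, d), fun i => ?_, ?_⟩
  · simp only [mem_threeAPs, fiber, mem_filter_univ] at ha hb
    have hfst : a + (i : ℕ) • (b - a) = a ∨ a + (i : ℕ) • (b - a) = b :=
      (nsmul_eq_zero_or_self (i : ℕ) (b - a)).imp (by simp [·]) (by simp [·])
    rw [Prod.smul_mk, Prod.mk_add_mk]
    rcases hfst with h | h <;> rw [h] <;>
      rcases nsmul_eq_zero_or_self_or_two_nsmul (i : ℕ) d with h' | h' | h' <;> simp [h', ha, hb]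
  · have hd : d ≠ 0 := (mem_threeAPs.1 ha).1
    have horder := addOrderOf_mk_eq_six (sub_ne_zero.2 hab.symm) hd
    intro i j hij
    exact Fin.ext (nsmul_injOn_Iio_addOrderOf (by simp [horder]) (by simp [horder])
      (add_left_cancel hij))

theorem card_mul_card_le_of_not_isDistinctAP_six {G H K : Type*} [Fintype V] [AddCommGroup G]
    [AddCommGroup H] [Fintype H] [DecidableEq H] [Field K] [Fintype K]
    [Module (ZMod 3) K] (e : G ≃+ V × K) {f : H →+ K} (hf : Function.Injective f) {A : Finset G}
    (hA : ¬ IsDistinctAP 6 (A : Set G)) :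
    Fintype.card H * #A ≤ Fintype.card V * Fintype.card K * addRothNumber (univ : Finset H) +
      Fintype.card H ^ 2 * (Fintype.card V + Fintype.card K) := by
  classical
  have hA' : ¬ IsDistinctAP 6 (A.map e.toEquiv.toEmbedding : Set (V × K)) := fun h =>
    hA (by simpa [Set.image_image] using h.image (f := e.symm.toAddMonoidHom) e.symm.injective)
  rw [← card_map e.toEquiv.toEmbedding, ← sum_card_fiber (A.map _)]
  exact card_mul_sum_card_le_of_disjoint_threeAPs hf (pairwise_disjoint_threeAPs_fiber hA')

/-- The Chinese remainder theorem in every coordinate. -/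
def piZModSixEquiv (n : ℕ) : (Fin n → ZMod 6) ≃+ (Fin n → ZMod 2) × (Fin n → ZMod 3) where
  toEquiv := (Equiv.piCongrRight fun _ =>
    (ZMod.chineseRemainder (m := 2) (n := 3) (by norm_num)).toEquiv).trans
      (Equiv.arrowProdEquivProdArrow _ _ _)
  map_add' x y := by ext <;> simp

theorem three_pow_mul_card_le_of_not_isDistinctAP_six {n m : ℕ} (hn : n ≠ 0) (hmn : m ≤ n)
    {A : Finset (Fin n → ZMod 6)} (hA : ¬ IsDistinctAP 6 (A : Set (Fin n → ZMod 6))) :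
    3 ^ m * #A ≤ 6 ^ n * (3 * #(lowDegreeExponents 3 m (2 * m / 3))) +
      9 ^ m * (2 ^ n + 3 ^ n) := by
  classical
  let K := GaloisField 3 n
  let _ : Fintype K := Fintype.ofFinite K
  have hrank : finrank (ZMod 3) (Fin n → ZMod 3) = finrank (ZMod 3) K :=
    (finrank_fin_fun _).trans (GaloisField.finrank 3 hn).symm
  have hcard : Fintype.card K = 3 ^ n := Fintype.card_eq_nat_card.trans (GaloisField.card 3 n hn)
  have hm : finrank (ZMod 3) (Fin m → ZMod 3) ≤ finrank (ZMod 3) K := by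
    simpa [← hrank] using hmn
  obtain ⟨f, hf⟩ := finrank_le_iff_exists_linearMap.1 hm
  let e : (Fin n → ZMod 6) ≃+ (Fin n → ZMod 2) × K := (piZModSixEquiv n).trans <|
    (AddEquiv.refl _).prodCongr (LinearEquiv.ofFinrankEq _ _ hrank).toAddEquiv
  calc 3 ^ m * #A = Fintype.card (Fin m → ZMod 3) * #A := by simp
    _ ≤ _ := card_mul_card_le_of_not_isDistinctAP_six e (f := f.toAddMonoidHom) hf hA
    _ = 6 ^ n * addRothNumber (univ : Finset (Fin m → ZMod 3)) + 9 ^ m * (2 ^ n + 3 ^ n) := by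
        simp [hcard, ← mul_pow, pow_right_comm _ m]
    _ ≤ _ := by
        gcongr
        simpa using addRothNumber_univ_le_card_lowDegreeExponents (F := ZMod 3) (n := m)

end SixAP

section Growth

theorem pow_mul_pow_div_le {x y a b : ℝ} {k : ℕ} (hk : k ≠ 0) (hx : 1 ≤ x) (hy : 1 ≤ y)
    (ha : 0 ≤ a) (hb : 0 ≤ b) (h : x ^ k * a ≤ b * y ^ k) (n : ℕ) :
    x ^ n * a ^ (n / k) ≤ x ^ k * (b ^ (n / k) * y ^ n) :=
  calc x ^ n * a ^ (n / k) = x ^ (n % k) * (x ^ k * a) ^ (n / k) := by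
        rw [mul_pow, ← pow_mul, ← mul_assoc, ← pow_add, Nat.mod_add_div]
    _ ≤ x ^ k * (b * y ^ k) ^ (n / k) := by
        gcongr
        exact (Nat.mod_lt n (Nat.pos_of_ne_zero hk)).le
    _ = x ^ k * (b ^ (n / k) * y ^ (k * (n / k))) := by rw [mul_pow, ← pow_mul]
    _ ≤ x ^ k * (b ^ (n / k) * y ^ n) := by
        gcongr
        exact Nat.mul_div_le n k

theorem card_lowDegreeExponents_three_le (q : ℕ) :
    (#(lowDegreeExponents 3 (24 * q) (16 * q)) : ℝ) ≤ ((49 / 25) ^ 24 / (3 / 5) ^ 16) ^ q := by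
  have h := card_lowDegreeExponents_mul_pow_le 3 (24 * q) (16 * q)
    (s := (3 / 5 : ℝ)) (by norm_num) (by norm_num) -- the optimal `s` is `(√33 - 1) / 8 ≈ 0.593`
  have hsum : ∑ j ∈ range 3, (3 / 5 : ℝ) ^ j = 49 / 25 := by norm_num [sum_range_succ]
  rwa [div_pow, le_div_iff₀ (by positivity), ← pow_mul, ← pow_mul, ← hsum]

theorem exists_card_le_mul_pow_of_not_isDistinctAP_six :
    ∃ C : ℝ, ∀ n ≠ 0, ∀ A : Finset (Fin n → ZMod 6),
      ¬ IsDistinctAP 6 (A : Set (Fin n → ZMod 6)) → (#A : ℝ) ≤ C * 5.7085 ^ n := by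
  refine ⟨3 * 6 ^ 41 + 2 * 3 ^ 41, fun n hn A hA => ?_⟩
  have hcapset_rate : (6 : ℝ) ^ 41 * ((49 / 25) ^ 24 / (3 / 5) ^ 16) ≤ 3 ^ 24 * 5.7085 ^ 41 := by
    norm_num
  have herror_rate : (3 : ℝ) ^ 41 * 9 ^ 24 ≤ 3 ^ 24 * 5.7085 ^ 41 := by norm_num
  -- Copies of `𝔽₃ᵐ` with `m ≈ 24 / 41 * n`: a smaller `m` spoils the cap set term, a larger `m` the
  -- error term.
  set q := n / 41
  have hcapset : (6 : ℝ) ^ n * #(lowDegreeExponents 3 (24 * q) (16 * q)) ≤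
      6 ^ 41 * ((3 ^ 24) ^ q * 5.7085 ^ n) :=
    (mul_le_mul_of_nonneg_left (card_lowDegreeExponents_three_le q) (by positivity)).trans <|
      pow_mul_pow_div_le (by norm_num) (by norm_num) (by norm_num) (by positivity) (by positivity)
        hcapset_rate n
  have herror : (3 : ℝ) ^ n * (9 ^ 24) ^ q ≤ 3 ^ 41 * ((3 ^ 24) ^ q * 5.7085 ^ n) :=
    pow_mul_pow_div_le (by norm_num) (by norm_num) (by norm_num) (by positivity) (by positivity)
      herror_rate n
  have hcount : ((3 ^ (24 * q) * #A : ℕ) : ℝ) ≤ _ :=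
    Nat.cast_le.2 (three_pow_mul_card_le_of_not_isDistinctAP_six hn (by omega : 24 * q ≤ n) hA)
  rw [show 2 * (24 * q) / 3 = 16 * q by omega] at hcount
  push_cast at hcount
  rw [pow_mul, pow_mul] at hcount
  have htwo : (2 : ℝ) ^ n ≤ 3 ^ n := by gcongr; norm_num
  refine le_of_mul_le_mul_left ?_ (by positivity : (0 : ℝ) < (3 ^ 24) ^ q)
  calc ((3 : ℝ) ^ 24) ^ q * #A
      ≤ 6 ^ n * (3 * #(lowDegreeExponents 3 (24 * q) (16 * q))) +
          (9 ^ 24) ^ q * (2 ^ n + 3 ^ n) := hcount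
    _ ≤ 3 * (6 ^ n * #(lowDegreeExponents 3 (24 * q) (16 * q))) +
          2 * (3 ^ n * (9 ^ 24) ^ q) := by
        have := mul_le_mul_of_nonneg_left htwo (by positivity : (0 : ℝ) ≤ (9 ^ 24) ^ q)
        linarith
    _ ≤ 3 * (6 ^ 41 * ((3 ^ 24) ^ q * 5.7085 ^ n)) +
          2 * (3 ^ 41 * ((3 ^ 24) ^ q * 5.7085 ^ n)) := by gcongr
    _ = _ := by ring

end Growth

theorem cast_rAP_le {k m n : ℕ} {b : ℝ} (hb : 0 ≤ b)
    (h : ∀ A : Finset (Fin n → ZMod m), ¬ IsDistinctAP k (A : Set (Fin n → ZMod m)) → #A ≤ b) :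
    (rAP k m n : ℝ) ≤ b := by
  refine (Nat.le_floor_iff hb).1 (csSup_le' ?_)
  rintro _ ⟨A, hA, rfl⟩
  exact Nat.le_floor (h A hA)

theorem r6_exp_small : ∃ N : ℕ, ∀ n : ℕ, N ≤ n → (rAP 6 6 n : ℝ) ≤ 5.709 ^ n := by
  obtain ⟨C, hC⟩ := exists_card_le_mul_pow_of_not_isDistinctAP_six
  have hlittleO : (fun n => C * (5.7085 : ℝ) ^ n) =o[Filter.atTop] fun n => (5.709 : ℝ) ^ n :=
    (isLittleO_pow_pow_of_lt_left (by norm_num) (by norm_num)).const_mul_left C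
  refine Filter.eventually_atTop.1 ?_
  filter_upwards [hlittleO.eventuallyLE, Filter.eventually_ne_atTop 0] with n hgrowth hn
  have hpow : (0 : ℝ) ≤ 5.709 ^ n := by positivity
  refine cast_rAP_le hpow fun A hA => (hC n hn A hA).trans ?_
  exact (Real.le_norm_self _).trans (hgrowth.trans_eq (Real.norm_of_nonneg hpow))
end

section
/- There exists N such that for all n ≥ N, 4.434^n ≤ 2^n · r_3(ℤ_3^n); i.e., for all sufficiently large n there is a subset of (ℤ/3ℤ)^n of size at least 4.434^n / 2^n containing no 3-term arithmetic progression of pairwise distinct elements. -/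
/-!
A progression-free set of size `s` in dimension `d` has progression-free powers of size `s ^ q` in
dimension `q * d`, so it suffices to find one with `2.217 ^ d < s`. Following Edel, such a set is
assembled in dimension `480 = 10 * 8 * 6` by substitution. Start from three classes of vectors in
`(ZMod 3) ^ 6`, each of them progression-free, such that if one term of a progression lies in the
small class `0`, then the two others lie in a common class. Substituting the classes for the letters
of a set of words over `{0, 1, 2}` gives a progression-free set as soon as no three words, not all
equal, show in every coordinate a pattern of classes that a progression may have. Words `1⋯1 0 2⋯2`
of length `8` give again three classes with the same property, and `252` words of length `10`, one
for each `5`-element support, give the set of size `252 * 96 ^ 5 * 112 ^ 75`.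
-/

open Finset Module

namespace CapSet

section Substitution

variable {X κ κ' ι : Type*}

/-- The relation `T` imposed on every coordinate of three vectors. -/
def Pointwise (T : X → X → X → Prop) (x y z : ι → X) : Prop :=
  ∀ i, T (x i) (y i) (z i)

/-- `F` is a separated family of finite sets: a triple related by `T` and drawn from the classes
`j`, `k`, `l` forces `R j k l`, and is constant if the three classes coincide. For `T = IsMidpoint`
every class is thus free of three-term progressions, and `R` bounds the mixed ones. -/
def IsSeparated (T : X → X → X → Prop) (R : κ → κ → κ → Prop) (F : κ → Finset X) : Prop :=
  ∀ ⦃j k l x y z⦄, x ∈ F j → y ∈ F k → z ∈ F l → T x y z →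
    R j k l ∧ (j = k → k = l → x = y ∧ y = z)

variable [Fintype ι] [DecidableEq ι] [DecidableEq X]

/-- Edel's extended product: every letter `k` of every word in the class `W j` is replaced by all
elements of `F k`. -/
def substitute (F : κ → Finset X) (W : κ' → Finset (ι → κ)) (j : κ') : Finset (ι → X) :=
  (W j).biUnion fun w ↦ Fintype.piFinset fun i ↦ F (w i)

variable {T : X → X → X → Prop} {R : κ → κ → κ → Prop} {R' : κ' → κ' → κ' → Prop}
  {F : κ → Finset X} {W : κ' → Finset (ι → κ)}

theorem mem_substitute {j : κ'} {x : ι → X} :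
    x ∈ substitute F W j ↔ ∃ w ∈ W j, ∀ i, x i ∈ F (w i) := by
  simp only [substitute, mem_biUnion, Fintype.mem_piFinset]

theorem IsSeparated.substitute (hF : IsSeparated T R F) (hW : IsSeparated (Pointwise R) R' W) :
    IsSeparated (Pointwise T) R' (substitute F W) := by
  intro j k l x y z hx hy hz hT
  obtain ⟨u, hu, hxu⟩ := mem_substitute.1 hx
  obtain ⟨v, hv, hyv⟩ := mem_substitute.1 hy
  obtain ⟨w, hw, hzw⟩ := mem_substitute.1 hz
  have hcoord i := hF (hxu i) (hyv i) (hzw i) (hT i)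
  obtain ⟨hR', heq⟩ := hW hu hv hw fun i ↦ (hcoord i).1
  refine ⟨hR', fun hjk hkl ↦ ?_⟩
  obtain ⟨rfl, rfl⟩ := heq hjk hkl
  exact ⟨funext fun i ↦ ((hcoord i).2 rfl rfl).1, funext fun i ↦ ((hcoord i).2 rfl rfl).2⟩

theorem card_substitute (hT : ∀ x, T x x x) (hF : IsSeparated T R F)
    (hW : IsSeparated (Pointwise R) R' W) (j : κ') :
    #(substitute F W j) = ∑ w ∈ W j, ∏ i, #(F (w i)) := by
  rw [substitute, card_biUnion]
  · simp only [Fintype.card_piFinset]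
  · intro u hu w hw huw
    refine disjoint_left.2 fun x hxu hxw ↦ huw ?_
    rw [Fintype.mem_piFinset] at hxu hxw
    exact ((hW hu hu hw fun i ↦ (hF (hxu i) (hxu i) (hxw i) (hT _)).1).2 rfl rfl).2

end Substitution

/-- `x, y, z` is a three-term arithmetic progression, in the subtraction-free form of
`ThreeAPFree`. -/
def IsMidpoint {G : Type*} [Add G] (x y z : G) : Prop := x + z = y + y

theorem isMidpoint_self {G : Type*} [Add G] (x : G) : IsMidpoint x x x := rfl

theorem pointwise_isMidpoint {ι G : Type*} [Add G] :
    Pointwise (ι := ι) (IsMidpoint (G := G)) = IsMidpoint := by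
  ext x y z
  exact funext_iff.symm

theorem IsSeparated.threeAPFree {κ G : Type*} [AddMonoid G] {R : κ → κ → κ → Prop}
    {F : κ → Finset G} (hF : IsSeparated IsMidpoint R F) (j : κ) :
    ThreeAPFree (F j : Set G) :=
  fun _ hx _ hy _ hz h ↦ ((hF hx hy hz h).2 rfl rfl).1

section Compatible

/-- The class patterns allowed for a progression: if one class is `0`, then the two others
coincide. -/
def Compatible (j k l : Fin 3) : Prop :=
  (j = 0 → k = l) ∧ (k = 0 → j = l) ∧ (l = 0 → j = k)

theorem Compatible.rotate {j k l : Fin 3} (h : Compatible j k l) : Compatible k l j := by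
  grind [Compatible]

variable {X κ ι : Type*} [Fintype ι] [DecidableEq ι] [DecidableEq X]
  {T : X → X → X → Prop} {R : κ → κ → κ → Prop} {F : Fin 3 → Finset X}
  {W : κ → Finset (ι → Fin 3)}

theorem card_substitute_of_card_zeros (hT : ∀ x, T x x x) (hF : IsSeparated T Compatible F)
    (hW : IsSeparated (Pointwise Compatible) R W) (hcard : #(F 1) = #(F 2)) {j : κ} {t : ℕ}
    (ht : ∀ w ∈ W j, #{i | w i = 0} = t) :
    #(substitute F W j) = #(W j) * (#(F 0) ^ t * #(F 1) ^ (Fintype.card ι - t)) := by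
  have hsize (a : Fin 3) : #(F a) = if a = 0 then #(F 0) else #(F 1) := by
    fin_cases a <;> simp [hcard]
  rw [card_substitute hT hF hW, ← smul_eq_mul, ← sum_const]
  refine sum_congr rfl fun w hw ↦ ?_
  have hnonzero : #{i | ¬ w i = 0} = Fintype.card ι - t := by
    rw [← ht w hw, ← card_univ]
    exact eq_tsub_of_add_eq ((add_comm _ _).trans (card_filter_add_card_filter_not _))
  rw [prod_congr rfl fun i _ ↦ hsize (w i), prod_ite, prod_const, prod_const, ht w hw, hnonzero]

end Compatible

section CutWords

variable {ι : Type*} [LinearOrder ι]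

/-- The word `1⋯1 0 2⋯2` over the letters `Fin 3`, with its letter `0` at position `i`. -/
def cutWord (i j : ι) : Fin 3 := if j < i then 1 else if i < j then 2 else 0

theorem cutWord_eq_zero_iff {i j : ι} : cutWord i j = 0 ↔ j = i := by
  grind [cutWord]

variable [Fintype ι]

/-- The family of words for the middle substitution: all cut words in class `0`, one constant word
in each of the classes `1` and `2`. -/
def cutWords (ι : Type*) [LinearOrder ι] [Fintype ι] : Fin 3 → Finset (ι → Fin 3) :=
  ![univ.image cutWord, {fun _ ↦ 1}, {fun _ ↦ 2}]

theorem card_cutWords_zero : #(cutWords ι 0) = Fintype.card ι :=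
  card_image_of_injective _ fun i _ h ↦
    cutWord_eq_zero_iff.1 ((congrFun h i).symm.trans (cutWord_eq_zero_iff.2 rfl))

theorem mem_cutWords {j : Fin 3} {x : ι → Fin 3} :
    x ∈ cutWords ι j ↔ (j = 0 ∧ ∃ a, x = cutWord a) ∨ (j ≠ 0 ∧ x = fun _ ↦ j) := by
  fin_cases j <;> simp [cutWords, eq_comm]

theorem isSeparated_cutWords :
    IsSeparated (Pointwise Compatible) Compatible (cutWords ι) := by
  intro j k l x y z hx hy hz h
  rw [mem_cutWords] at hx hy hz
  -- Two cuts `a < b` force a third one strictly in between, where they disagree.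
  rcases hx with ⟨rfl, a, rfl⟩ | ⟨hj, rfl⟩ <;> rcases hy with ⟨rfl, b, rfl⟩ | ⟨hk, rfl⟩ <;>
    rcases hz with ⟨rfl, c, rfl⟩ | ⟨hl, rfl⟩
  · grind [Compatible, cutWord, h a, h b, h c]
  · grind [Compatible, cutWord, h a, h b]
  · grind [Compatible, cutWord, h a, h c]
  · grind [Compatible, cutWord, h a]
  · grind [Compatible, cutWord, h b, h c]
  · grind [Compatible, cutWord, h b]
  · grind [Compatible, cutWord, h c]
  · grind [Compatible]

variable {X : Type*} [DecidableEq X] {T : X → X → X → Prop} {F : Fin 3 → Finset X}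

theorem card_substitute_cutWords_zero (hT : ∀ x, T x x x) (hF : IsSeparated T Compatible F)
    (hcard : #(F 1) = #(F 2)) :
    #(substitute F (cutWords ι) 0) =
      Fintype.card ι * (#(F 0) * #(F 1) ^ (Fintype.card ι - 1)) := by
  have hzeros : ∀ w ∈ cutWords ι 0, #{i | w i = 0} = 1 := by
    intro w hw
    obtain ⟨a, -, rfl⟩ := mem_image.1 hw
    exact card_eq_one.2 ⟨a, by ext i; simp [cutWord_eq_zero_iff]⟩
  rw [card_substitute_of_card_zeros hT hF isSeparated_cutWords hcard hzeros, card_cutWords_zero,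
    pow_one]

theorem card_substitute_cutWords_of_ne_zero {j : Fin 3} (hj : j ≠ 0) :
    #(substitute F (cutWords ι) j) = #(F j) ^ Fintype.card ι := by
  have hconst : cutWords ι j = {fun _ ↦ j} := by
    ext w
    simp [mem_cutWords, hj]
  rw [substitute, hconst, singleton_biUnion, Fintype.card_piFinset, prod_const, card_univ]

end CutWords

section SignedWords

variable {ι : Type*} [DecidableEq ι] (M : ι → ι → ZMod 2)

/-- The word over `Fin 3` whose nonzero letters stand on `A`, where the letter at `i ∈ A` is `1` or
`2` according to the parity of the row sum `∑ j ∈ A, M i j`. -/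
def signedWord (A : Finset ι) (i : ι) : Fin 3 :=
  if i ∈ A then if ∑ j ∈ A, M i j = 0 then 1 else 2 else 0

/-- Each row of `M` indexed by `P` has the same sum over `Q` as over `R`. -/
def IsBalanced (P Q R : Finset ι) : Prop := ∀ i ∈ P, ∑ j ∈ Q, M i j = ∑ j ∈ R, M i j

variable {M}

theorem signedWord_eq_zero_iff {A : Finset ι} {i : ι} : signedWord M A i = 0 ↔ i ∉ A := by
  unfold signedWord
  split_ifs <;> simp_all

theorem signedWord_injective : Function.Injective (signedWord M) := fun A B h ↦ by
  ext i
  rw [← not_iff_not, ← signedWord_eq_zero_iff (M := M), h, signedWord_eq_zero_iff]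

theorem sum_eq_of_signedWord_eq {A B : Finset ι} {i : ι} (hA : i ∈ A) (hB : i ∈ B)
    (h : signedWord M A i = signedWord M B i) : ∑ j ∈ A, M i j = ∑ j ∈ B, M i j := by
  have hbit : ∀ a b : ZMod 2, ((if a = 0 then 1 else 2 : Fin 3) = if b = 0 then 1 else 2) →
      a = b := by decide
  simp only [signedWord, hA, hB, if_true] at h
  exact hbit _ _ h

theorem sdiff_eq_sdiff_of_pointwise_compatible {A B C : Finset ι}
    (h : Pointwise Compatible (signedWord M A) (signedWord M B) (signedWord M C)) :
    A \ C = B \ C := by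
  ext i
  obtain ⟨-, -, hC⟩ := h i
  rw [signedWord_eq_zero_iff] at hC
  simp only [mem_sdiff, and_congr_left_iff]
  intro hi
  rw [← not_iff_not, ← signedWord_eq_zero_iff (M := M), hC hi, signedWord_eq_zero_iff]

theorem isBalanced_of_pointwise_compatible {A B C : Finset ι}
    (h : Pointwise Compatible (signedWord M A) (signedWord M B) (signedWord M C)) :
    IsBalanced M (A \ C) (A \ B) (B \ A) := by
  intro i hi
  have hiB : i ∈ B \ C := sdiff_eq_sdiff_of_pointwise_compatible h ▸ hi
  rw [mem_sdiff] at hi hiB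
  have hsum := sum_eq_of_signedWord_eq hi.1 hiB.1 ((h i).2.2 (signedWord_eq_zero_iff.2 hi.2))
  rwa [← sub_eq_zero, sum_sdiff_sub_sum_sdiff, sub_eq_zero]

/-- The obstruction to the separation of signed words: three compatible words of sets `A`, `B`, `C`
of equal size yield such a triple `A \ C`, `C \ B`, `B \ A`. -/
structure IsBalancedTriple (M : ι → ι → ZMod 2) (m : ℕ) (P Q R : Finset ι) : Prop where
  card_left : #P = m
  card_mid : #Q = m
  card_right : #R = m
  disjoint_left_mid : Disjoint P Q
  disjoint_left_right : Disjoint P R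
  disjoint_mid_right : Disjoint Q R
  left : IsBalanced M P Q R
  mid : IsBalanced M Q R P
  right : IsBalanced M R P Q

theorem isBalancedTriple_of_pointwise_compatible {A B C : Finset ι} (hAB : #A = #B)
    (hBC : #B = #C)
    (h : Pointwise Compatible (signedWord M A) (signedWord M B) (signedWord M C)) :
    IsBalancedTriple M #(A \ C) (A \ C) (C \ B) (B \ A) := by
  have hBCA : Pointwise Compatible (signedWord M B) (signedWord M C) (signedWord M A) :=
    fun i ↦ (h i).rotate
  have hCAB : Pointwise Compatible (signedWord M C) (signedWord M A) (signedWord M B) :=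
    fun i ↦ (hBCA i).rotate
  have hAC : A \ C = B \ C := sdiff_eq_sdiff_of_pointwise_compatible h
  have hBA : B \ A = C \ A := sdiff_eq_sdiff_of_pointwise_compatible hBCA
  have hCB : C \ B = A \ B := sdiff_eq_sdiff_of_pointwise_compatible hCAB
  exact
    { card_left := rfl
      card_mid := by rw [hAC, card_sdiff_comm hBC]
      card_right := by rw [hBA, card_sdiff_comm (hAB.trans hBC)]
      disjoint_left_mid := sdiff_disjoint.mono_right sdiff_subset
      disjoint_left_right := disjoint_sdiff.mono_left sdiff_subset
      disjoint_mid_right := sdiff_disjoint.mono_right sdiff_subset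
      left := hCB ▸ isBalanced_of_pointwise_compatible h
      mid := hBA ▸ isBalanced_of_pointwise_compatible hCAB
      right := hAC ▸ isBalanced_of_pointwise_compatible hBCA }

theorem eq_of_pointwise_compatible {w : ℕ}
    (hM : ∀ m, 0 < m → 2 * m ≤ w → ∀ P Q R, ¬ IsBalancedTriple M m P Q R)
    {A B C : Finset ι} (hA : #A = w) (hB : #B = w) (hC : #C = w)
    (h : Pointwise Compatible (signedWord M A) (signedWord M B) (signedWord M C)) :
    A = B ∧ B = C := by
  have htriple := isBalancedTriple_of_pointwise_compatible (hA.trans hB.symm) (hB.trans hC.symm) h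
  have hle : 2 * #(A \ C) ≤ w := by
    have hCB : C \ B = A \ B :=
      sdiff_eq_sdiff_of_pointwise_compatible fun i ↦ (h i).rotate.rotate
    calc 2 * #(A \ C) = #(A \ C) + #(C \ B) := by rw [htriple.card_mid, two_mul]
      _ = #(A \ C ∪ A \ B) := by rw [card_union_of_disjoint (hCB ▸ htriple.disjoint_left_mid), hCB]
      _ ≤ w := hA ▸ card_le_card (union_subset sdiff_subset sdiff_subset)
  have hzero : #(A \ C) = 0 := by
    by_contra hne
    exact hM _ (Nat.pos_of_ne_zero hne) hle _ _ _ htriple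
  have hAC : A = C := eq_of_subset_of_card_le
    (sdiff_eq_empty_iff_subset.1 (card_eq_zero.1 hzero)) (hC.trans hA.symm).le
  have hBA : B = A := eq_of_subset_of_card_le
    (sdiff_eq_empty_iff_subset.1 (card_eq_zero.1 (htriple.card_right.trans hzero)))
    (hA.trans hB.symm).le
  exact ⟨hBA.symm, hBA.trans hAC⟩

variable [Fintype ι]

/-- The signed words of all `w`-element sets, as a family with a single class. -/
def signedWords (M : ι → ι → ZMod 2) (w : ℕ) (_ : Unit) : Finset (ι → Fin 3) :=
  (powersetCard w univ).image (signedWord M)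

theorem card_signedWords (w : ℕ) : #(signedWords M w ()) = (Fintype.card ι).choose w := by
  rw [signedWords, card_image_of_injective _ signedWord_injective, card_powersetCard, card_univ]

theorem card_zeros_of_mem_signedWords {w : ℕ} {x : ι → Fin 3} (hx : x ∈ signedWords M w ()) :
    #{i | x i = 0} = Fintype.card ι - w := by
  obtain ⟨A, hA, rfl⟩ := mem_image.1 hx
  simp only [signedWord_eq_zero_iff]
  rw [← mem_powersetCard_univ.1 hA, ← card_compl]
  congr 1
  ext i
  simp only [mem_filter_univ, mem_compl]

theorem isSeparated_signedWords {w : ℕ}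
    (hM : ∀ m, 0 < m → 2 * m ≤ w → ∀ P Q R, ¬ IsBalancedTriple M m P Q R) :
    IsSeparated (Pointwise Compatible) (fun _ _ _ ↦ True) (signedWords M w) := by
  intro _ _ _ x y z hx hy hz h
  simp only [signedWords, mem_image, mem_powersetCard_univ] at hx hy hz
  obtain ⟨A, hA, rfl⟩ := hx
  obtain ⟨B, hB, rfl⟩ := hy
  obtain ⟨C, hC, rfl⟩ := hz
  obtain ⟨rfl, rfl⟩ := eq_of_pointwise_compatible hM hA hB hC h
  exact ⟨trivial, fun _ _ ↦ ⟨rfl, rfl⟩⟩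

end SignedWords

section Circulant

/-- The indicator vector of `{2, 4, 6}`, found by a search for circulant matrices of order ten
without balanced triples of singletons or of pairs. -/
def shiftVector : Fin 10 → ZMod 2 := ![0, 0, 1, 0, 1, 0, 1, 0, 0, 0]

/-- The circulant matrix with first column `shiftVector`. -/
def shiftMatrix (i j : Fin 10) : ZMod 2 := shiftVector (i - j)

theorem shiftMatrix_sub_sub (i j a : Fin 10) : shiftMatrix (i - a) (j - a) = shiftMatrix i j := by
  rw [shiftMatrix, sub_sub_sub_cancel_right, shiftMatrix]

theorem not_isBalancedTriple_one (P Q R : Finset (Fin 10)) :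
    ¬ IsBalancedTriple shiftMatrix 1 P Q R := by
  have hpoints : ∀ p q r : Fin 10, p ≠ q → p ≠ r → q ≠ r → shiftMatrix p q = shiftMatrix p r →
      shiftMatrix q r = shiftMatrix q p → shiftMatrix r p ≠ shiftMatrix r q := by decide +kernel
  intro h
  obtain ⟨p, rfl⟩ := card_eq_one.1 h.card_left
  obtain ⟨q, rfl⟩ := card_eq_one.1 h.card_mid
  obtain ⟨r, rfl⟩ := card_eq_one.1 h.card_right
  have hleft := h.left
  have hmid := h.mid
  have hright := h.right
  simp only [IsBalanced, mem_singleton, forall_eq, sum_singleton] at hleft hmid hright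
  exact hpoints p q r (disjoint_singleton.1 h.disjoint_left_mid)
    (disjoint_singleton.1 h.disjoint_left_right) (disjoint_singleton.1 h.disjoint_mid_right)
    hleft hmid hright

/-- Balance of the row `i` of `shiftMatrix` between two pairs of columns, given by their elements so
that it can be decided by enumeration. -/
def IsPairBalanced (i q q' r r' : Fin 10) : Prop :=
  shiftMatrix i q + shiftMatrix i q' = shiftMatrix i r + shiftMatrix i r'

instance (i q q' r r' : Fin 10) : Decidable (IsPairBalanced i q q' r r') :=
  inferInstanceAs (Decidable (_ = _))

theorem isPairBalanced_sub {i q q' r r' : Fin 10} (h : IsPairBalanced i q q' r r') (a : Fin 10) :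
    IsPairBalanced (i - a) (q - a) (q' - a) (r - a) (r' - a) := by
  simpa only [IsPairBalanced, shiftMatrix_sub_sub] using h

set_option maxRecDepth 10000 in
theorem not_isPairBalanced_of_zero : ∀ q ∉ [0], ∀ q' ∉ [0, q], ∀ r ∉ [0, q, q'],
    ∀ r' ∉ [0, q, q', r], IsPairBalanced 0 q q' r r' → ∀ p ∉ [0, q, q', r, r'],
    ¬ (IsPairBalanced p q q' r r' ∧ IsPairBalanced q r r' 0 p ∧ IsPairBalanced q' r r' 0 p ∧
      IsPairBalanced r 0 p q q' ∧ IsPairBalanced r' 0 p q q') := by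
  decide +kernel

theorem not_isPairBalanced_of_nodup {p p' q q' r r' : Fin 10}
    (hnodup : [p, p', q, q', r, r'].Nodup)
    (hp : IsPairBalanced p q q' r r') (hp' : IsPairBalanced p' q q' r r')
    (hq : IsPairBalanced q r r' p p') (hq' : IsPairBalanced q' r r' p p')
    (hr : IsPairBalanced r p p' q q') : ¬ IsPairBalanced r' p p' q q' := by
  intro hr'
  have hnodup' : [p - p, p' - p, q - p, q' - p, r - p, r' - p].Nodup :=
    hnodup.map (sub_left_injective (b := p))
  replace hp := isPairBalanced_sub hp p
  replace hp' := isPairBalanced_sub hp' p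
  replace hq := isPairBalanced_sub hq p
  replace hq' := isPairBalanced_sub hq' p
  replace hr := isPairBalanced_sub hr p
  replace hr' := isPairBalanced_sub hr' p
  rw [sub_self] at hnodup' hp hq hq' hr hr'
  exact not_isPairBalanced_of_zero (q - p) (by grind) (q' - p) (by grind) (r - p) (by grind)
    (r' - p) (by grind) hp (p' - p) (by grind) ⟨hp', hq, hq', hr, hr'⟩

theorem not_isBalancedTriple_two (P Q R : Finset (Fin 10)) :
    ¬ IsBalancedTriple shiftMatrix 2 P Q R := by
  intro h
  obtain ⟨p, p', hp, rfl⟩ := card_eq_two.1 h.card_left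
  obtain ⟨q, q', hq, rfl⟩ := card_eq_two.1 h.card_mid
  obtain ⟨r, r', hr, rfl⟩ := card_eq_two.1 h.card_right
  have hleft := h.left
  have hmid := h.mid
  have hright := h.right
  simp only [IsBalanced, mem_insert, mem_singleton, forall_eq_or_imp, forall_eq, sum_pair hp,
    sum_pair hq, sum_pair hr] at hleft hmid hright
  have hnodup : [p, p', q, q', r, r'].Nodup := by
    have hPQ := h.disjoint_left_mid
    have hPR := h.disjoint_left_right
    have hQR := h.disjoint_mid_right
    simp only [disjoint_insert_left, disjoint_singleton_left, mem_insert, mem_singleton,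
      not_or] at hPQ hPR hQR
    simp [hp, hq, hr, hPQ, hPR, hQR]
  exact not_isPairBalanced_of_nodup hnodup hleft.1 hleft.2 hmid.1 hmid.2 hright.1 hright.2

theorem isSeparated_signedWords_shiftMatrix :
    IsSeparated (Pointwise Compatible) (fun _ _ _ ↦ True) (signedWords shiftMatrix 5) := by
  refine isSeparated_signedWords fun m hpos hle ↦ ?_
  obtain rfl | rfl : m = 1 ∨ m = 2 := by lia
  · exact not_isBalancedTriple_one
  · exact not_isBalancedTriple_two

end Circulant

section BaseFamily

variable {ι : Type*} {x y z : ι → ZMod 3}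

theorem isMidpoint_iff_add_add_eq_zero : IsMidpoint x y z ↔ x + y + z = 0 := by
  have hcoord : ∀ a b c : ZMod 3, a + c = b + b ↔ a + b + c = 0 := by decide
  simp only [IsMidpoint, funext_iff, Pi.add_apply, Pi.zero_apply, hcoord]

variable [Fintype ι]

/-- The support of a vector, as a `Finset`. -/
def supp (x : ι → ZMod 3) : Finset ι := {i | x i ≠ 0}

theorem mem_supp {i : ι} : i ∈ supp x ↔ x i ≠ 0 := mem_filter_univ i

theorem supp_subset_union [DecidableEq ι] (h : x + y + z = 0) : supp x ⊆ supp y ∪ supp z := by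
  intro i
  have hi : x i + y i + z i = 0 := congrFun h i
  simp only [mem_union, mem_supp]
  contrapose!
  rintro ⟨hy, hz⟩
  simpa only [hy, hz, add_zero] using hi

theorem eq_of_supp_eq (h : x + y + z = 0) (hxy : supp x = supp y) (hyz : supp y = supp z) :
    x = y ∧ y = z := by
  have hcoord : ∀ a b c : ZMod 3, a + b + c = 0 → (a = 0 ↔ b = 0) → (b = 0 ↔ c = 0) →
      a = b ∧ b = c := by decide
  have heq i := hcoord _ _ _ (congrFun h i)
    (not_iff_not.1 <| by rw [← ne_eq, ← mem_supp, hxy, mem_supp])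
    (not_iff_not.1 <| by rw [← ne_eq, ← mem_supp, hyz, mem_supp])
  exact ⟨funext fun i ↦ (heq i).1, funext fun i ↦ (heq i).2⟩

theorem neg_one_pow_card_supp_mul_prod (h : x + y + z = 0) (hy : supp y = univ)
    (hz : supp z = univ) :
    (-1) ^ #(supp x) * ∏ i, y i = (-1) ^ Fintype.card ι * ∏ i, z i := by
  have hcoord : ∀ a b c : ZMod 3, a + b + c = 0 → b ≠ 0 → c ≠ 0 →
      (if a ≠ 0 then -1 else 1) * b = -c := by decide
  calc (-1) ^ #(supp x) * ∏ i, y i = ∏ i, (if x i ≠ 0 then -1 else 1) * y i := by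
        rw [prod_mul_distrib, prod_ite, prod_const, prod_const_one, mul_one, supp]
    _ = ∏ i, -z i := prod_congr rfl fun i _ ↦
        hcoord _ _ _ (congrFun h i) (mem_supp.1 (hy ▸ mem_univ i)) (mem_supp.1 (hz ▸ mem_univ i))
    _ = (-1) ^ Fintype.card ι * ∏ i, z i := by rw [prod_neg, card_univ]

theorem even_card_supp (hι : Even (Fintype.card ι)) (h : x + y + z = 0) (hy : supp y = univ)
    (hz : supp z = univ) (hy' : ∏ i, y i ≠ -1) (hz' : ∏ i, z i ≠ -1) : Even #(supp x) := by
  have hprod := neg_one_pow_card_supp_mul_prod h hy hz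
  rw [hι.neg_one_pow, one_mul] at hprod
  by_contra hodd
  rw [(Nat.not_even_iff_odd.1 hodd).neg_one_pow] at hprod
  have hy0 : ∏ i, y i ≠ 0 := prod_ne_zero_iff.2 fun i _ ↦ mem_supp.1 (hy ▸ mem_univ i)
  have hsign : ∀ a b : ZMod 3, -1 * a = b → a ≠ 0 → a ≠ -1 → b = -1 := by decide
  exact hz' (hsign _ _ hprod hy0 hy')

/-- The ten faces of the six-vertex triangulation of the projective plane: any two points lie in
exactly two faces, and of two complementary triples exactly one is a face. -/
def faces : Finset (Finset (Fin 6)) :=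
  {{0, 1, 2}, {0, 2, 3}, {0, 3, 4}, {0, 4, 5}, {0, 5, 1},
    {1, 2, 4}, {2, 3, 5}, {3, 4, 1}, {4, 5, 2}, {5, 1, 3}}

/-- The supports allowed in the three classes of `baseFamily`: the singletons, the faces, and the
complements of the faces, where the full set is added to the last two. -/
def supports : Fin 3 → Finset (Finset (Fin 6)) :=
  ![powersetCard 1 univ, insert univ faces, insert univ (faces.image compl)]

/-- The six-dimensional family, with classes of sizes `12`, `112`, `112`. Since the product of the
coordinates is not `-1`, a vector of full support has an even number of coordinates `-1`. -/
def baseFamily (j : Fin 3) : Finset (Fin 6 → ZMod 3) := {x | supp x ∈ supports j ∧ ∏ i, x i ≠ -1}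

theorem mem_baseFamily {j : Fin 3} {x : Fin 6 → ZMod 3} :
    x ∈ baseFamily j ↔ supp x ∈ supports j ∧ ∏ i, x i ≠ -1 := mem_filter_univ x

set_option maxRecDepth 10000 in
theorem card_baseFamily_zero : #(baseFamily 0) = 12 := by decide +kernel

set_option maxRecDepth 10000 in
theorem card_baseFamily_one : #(baseFamily 1) = 112 := by decide +kernel

set_option maxRecDepth 10000 in
theorem card_baseFamily_two : #(baseFamily 2) = 112 := by decide +kernel

set_option maxRecDepth 10000 in
theorem supports_eq_of_subset_insert : ∀ k l, ∀ T ∈ supports k, ∀ U ∈ supports l, ∀ a,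
    T ⊆ insert a U → U ⊆ insert a T → T = U ∧ (T = univ ∨ k = l) := by decide +kernel

set_option maxRecDepth 10000 in
theorem supports_eq_or_odd_of_subset_union : ∀ j ≠ 0, ∀ S ∈ supports j, ∀ T ∈ supports j,
    ∀ U ∈ supports j, S ⊆ T ∪ U → T ⊆ S ∪ U → U ⊆ S ∪ T →
    (S = T ∧ T = U) ∨ (Odd #S ∧ T = univ ∧ U = univ) ∨
      (Odd #T ∧ S = univ ∧ U = univ) ∨ (Odd #U ∧ S = univ ∧ T = univ) := by decide +kernel

variable {x y z : Fin 6 → ZMod 3}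

theorem eq_and_supp_eq_of_mem_baseFamily_zero {k l : Fin 3} (hx : x ∈ baseFamily 0)
    (hy : y ∈ baseFamily k) (hz : z ∈ baseFamily l) (h : x + y + z = 0) :
    k = l ∧ supp y = supp z := by
  rw [mem_baseFamily] at hx hy hz
  have hsingle : supp x ∈ powersetCard 1 univ := hx.1
  obtain ⟨a, ha⟩ := card_eq_one.1 (mem_powersetCard_univ.1 hsingle)
  have hyz : supp y ⊆ insert a (supp z) := by
    rw [insert_eq, ← ha]
    exact supp_subset_union (by rw [← h]; abel)
  have hzy : supp z ⊆ insert a (supp y) := by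
    rw [insert_eq, ← ha]
    exact supp_subset_union (by rw [← h]; abel)
  obtain ⟨heq, huniv | hkl⟩ := supports_eq_of_subset_insert k l _ hy.1 _ hz.1 a hyz hzy
  · have heven := even_card_supp (by decide) h huniv (heq ▸ huniv) hy.2 hz.2
    simp [ha] at heven
  · exact ⟨hkl, heq⟩

theorem supp_eq_of_mem_baseFamily {j : Fin 3} (hj : j ≠ 0) (hx : x ∈ baseFamily j)
    (hy : y ∈ baseFamily j) (hz : z ∈ baseFamily j) (h : x + y + z = 0) :
    supp x = supp y ∧ supp y = supp z := by
  have hyxz : y + x + z = 0 := by rw [← h]; abel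
  have hzxy : z + x + y = 0 := by rw [← h]; abel
  rw [mem_baseFamily] at hx hy hz
  obtain heq | ⟨hodd, hT, hU⟩ | ⟨hodd, hS, hU⟩ | ⟨hodd, hS, hT⟩ :=
    supports_eq_or_odd_of_subset_union j hj _ hx.1 _ hy.1 _ hz.1 (supp_subset_union h)
      (supp_subset_union hyxz) (supp_subset_union hzxy)
  · exact heq
  · exact absurd (even_card_supp (by decide) h hT hU hy.2 hz.2) (Nat.not_even_iff_odd.2 hodd)
  · exact absurd (even_card_supp (by decide) hyxz hS hU hx.2 hz.2) (Nat.not_even_iff_odd.2 hodd)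
  · exact absurd (even_card_supp (by decide) hzxy hS hT hx.2 hy.2) (Nat.not_even_iff_odd.2 hodd)

theorem isSeparated_baseFamily : IsSeparated IsMidpoint Compatible baseFamily := by
  intro j k l x y z hx hy hz h
  rw [isMidpoint_iff_add_add_eq_zero] at h
  have hyxz : y + x + z = 0 := by rw [← h]; abel
  have hzxy : z + x + y = 0 := by rw [← h]; abel
  refine ⟨⟨?_, ?_, ?_⟩, ?_⟩
  · rintro rfl
    exact (eq_and_supp_eq_of_mem_baseFamily_zero hx hy hz h).1
  · rintro rfl
    exact (eq_and_supp_eq_of_mem_baseFamily_zero hy hx hz hyxz).1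
  · rintro rfl
    exact (eq_and_supp_eq_of_mem_baseFamily_zero hz hx hy hzxy).1
  · rintro rfl rfl
    suffices supp x = supp y ∧ supp y = supp z from eq_of_supp_eq h this.1 this.2
    by_cases hj : j = 0
    · subst hj
      exact ⟨(eq_and_supp_eq_of_mem_baseFamily_zero hz hx hy hzxy).2,
        (eq_and_supp_eq_of_mem_baseFamily_zero hx hy hz h).2⟩
    · exact supp_eq_of_mem_baseFamily hj hx hy hz h

end BaseFamily

section Cap

/-- The family in dimension `8 * 6` with classes of sizes `96 * 112 ^ 7`, `112 ^ 8`, `112 ^ 8`. -/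
def extendedFamily : Fin 3 → Finset (Fin 8 → Fin 6 → ZMod 3) :=
  substitute baseFamily (cutWords (Fin 8))

/-- The progression-free set in dimension `10 * 8 * 6 = 480`. -/
def cap : Finset (Fin 10 → Fin 8 → Fin 6 → ZMod 3) :=
  substitute extendedFamily (signedWords shiftMatrix 5) ()

theorem isSeparated_extendedFamily : IsSeparated IsMidpoint Compatible extendedFamily := by
  rw [← pointwise_isMidpoint]
  exact isSeparated_baseFamily.substitute isSeparated_cutWords

theorem threeAPFree_cap : ThreeAPFree (cap : Set (Fin 10 → Fin 8 → Fin 6 → ZMod 3)) := by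
  have hcap := isSeparated_extendedFamily.substitute isSeparated_signedWords_shiftMatrix
  rw [pointwise_isMidpoint] at hcap
  exact hcap.threeAPFree ()

theorem card_extendedFamily_zero : #(extendedFamily 0) = 8 * (12 * 112 ^ 7) := by
  rw [extendedFamily, card_substitute_cutWords_zero isMidpoint_self isSeparated_baseFamily
    (card_baseFamily_one.trans card_baseFamily_two.symm), card_baseFamily_zero,
    card_baseFamily_one, Fintype.card_fin]

theorem card_extendedFamily_one : #(extendedFamily 1) = 112 ^ 8 := by
  rw [extendedFamily, card_substitute_cutWords_of_ne_zero one_ne_zero, card_baseFamily_one,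
    Fintype.card_fin]

theorem card_extendedFamily_two : #(extendedFamily 2) = 112 ^ 8 := by
  rw [extendedFamily, card_substitute_cutWords_of_ne_zero (by decide), card_baseFamily_two,
    Fintype.card_fin]

theorem card_cap : #cap = 252 * ((8 * (12 * 112 ^ 7)) ^ 5 * (112 ^ 8) ^ 5) := by
  rw [cap, card_substitute_of_card_zeros isMidpoint_self isSeparated_extendedFamily
    isSeparated_signedWords_shiftMatrix (card_extendedFamily_one.trans card_extendedFamily_two.symm)
    fun _ ↦ card_zeros_of_mem_signedWords, card_signedWords, card_extendedFamily_zero,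
    card_extendedFamily_one, Fintype.card_fin]
  rfl

set_option exponentiation.threshold 1000 in
theorem pow_lt_card_cap : (2.217 : ℝ) ^ 480 < #cap := by
  rw [card_cap]
  norm_num

theorem finrank_cap_space : finrank (ZMod 3) (Fin 10 → Fin 8 → Fin 6 → ZMod 3) = 480 := by
  simp [finrank_pi_fintype]

end Cap

section Growth

theorem not_isDistinctAP_of_threeAPFree {G : Type*} [AddCommGroup G] {A : Set G}
    (hA : ThreeAPFree A) : ¬ IsDistinctAP 3 A := by
  rintro ⟨a, d, hmem, hinj⟩
  have h0 : a ∈ A := by simpa using hmem 0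
  have h1 : a + d ∈ A := by simpa using hmem 1
  have h2 : a + 2 • d ∈ A := by simpa using hmem 2
  have had : a = a + d := hA h0 h1 h2 (by abel)
  exact absurd (hinj (a₁ := 0) (a₂ := 1) (by simpa using had)) (by decide)

variable {m n : ℕ} [NeZero m]

theorem card_le_rAP_of_threeAPFree {A : Finset (Fin n → ZMod m)}
    (hA : ThreeAPFree (A : Set (Fin n → ZMod m))) : #A ≤ rAP 3 m n := by
  refine le_csSup ⟨Fintype.card (Fin n → ZMod m), ?_⟩ ⟨A, not_isDistinctAP_of_threeAPFree hA, rfl⟩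
  rintro _ ⟨B, -, rfl⟩
  exact card_le_univ B

variable [Nontrivial (ZMod m)] {V : Type*} [AddCommGroup V] [Module (ZMod m) V]
  [Module.Free (ZMod m) V] [Module.Finite (ZMod m) V] {A : Finset V}

theorem card_le_rAP_of_finrank_le (hA : ThreeAPFree (A : Set V))
    (hn : finrank (ZMod m) V ≤ n) : #A ≤ rAP 3 m n := by
  classical
  have hrank : finrank (ZMod m) V ≤ finrank (ZMod m) (Fin n → ZMod m) := by
    rwa [finrank_fin_fun]
  obtain ⟨f, hf⟩ := finrank_le_iff_exists_linearMap.1 hrank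
  rw [← card_image_of_injective A hf]
  apply card_le_rAP_of_threeAPFree
  rw [coe_image]
  exact hA.image' f hf.injOn

theorem card_pow_le_rAP (hA : ThreeAPFree (A : Set V)) {q : ℕ}
    (hn : q * finrank (ZMod m) V ≤ n) : #A ^ q ≤ rAP 3 m n := by
  classical
  have hpower : ThreeAPFree (Fintype.piFinset fun _ : Fin q ↦ A : Set (Fin q → V)) := by
    rw [Fintype.coe_piFinset]
    exact threeAPFree_pi fun _ ↦ hA
  have hrank : finrank (ZMod m) (Fin q → V) ≤ n := by
    rwa [finrank_pi_fintype, sum_const, card_univ, Fintype.card_fin, smul_eq_mul]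
  simpa only [Fintype.card_piFinset_const] using card_le_rAP_of_finrank_le hpower hrank

theorem exists_forall_pow_le_rAP {c : ℝ} (hc : 1 ≤ c) (hA : ThreeAPFree (A : Set V))
    (hcard : c ^ finrank (ZMod m) V < #A) :
    ∃ N : ℕ, ∀ n : ℕ, N ≤ n → c ^ n ≤ rAP 3 m n := by
  set d := finrank (ZMod m) V
  have hcd : 0 < c ^ d := by positivity
  have hA1 : 1 < #A := by exact_mod_cast (one_le_pow₀ hc).trans_lt hcard
  have hdpos : 0 < d := by
    obtain ⟨a, -, b, -, hab⟩ := one_lt_card.1 hA1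
    exact (finrank_pos_iff_of_free (ZMod m) V).2 ⟨a, b, hab⟩
  obtain ⟨q₀, hq₀⟩ := pow_unbounded_of_one_lt (c ^ d) ((one_lt_div hcd).2 hcard)
  refine ⟨q₀ * d, fun n hn ↦ ?_⟩
  have hq : q₀ ≤ n / d := (Nat.le_div_iff_mul_le hdpos).2 hn
  have hnd : n ≤ d + d * (n / d) := by
    have := Nat.div_add_mod n d
    have := Nat.mod_lt n hdpos
    omega
  calc c ^ n ≤ c ^ (d + d * (n / d)) := pow_le_pow_right₀ hc hnd
    _ = c ^ d * (c ^ d) ^ (n / d) := by rw [pow_add, pow_mul]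
    _ ≤ (#A / c ^ d) ^ (n / d) * (c ^ d) ^ (n / d) := by
        gcongr
        exact hq₀.le.trans (pow_le_pow_right₀ ((one_lt_div hcd).2 hcard).le hq)
    _ = #A ^ (n / d) := by rw [← mul_pow, div_mul_cancel₀ _ hcd.ne']
    _ ≤ rAP 3 m n := by exact_mod_cast card_pow_le_rAP hA (Nat.div_mul_le_self n d)

end Growth

end CapSet

theorem r3_lower : ∃ N : ℕ, ∀ n : ℕ, N ≤ n →
    (4.434 : ℝ) ^ n ≤ 2 ^ n * rAP 3 3 n := by
  have hcap : (2.217 : ℝ) ^ finrank (ZMod 3) (Fin 10 → Fin 8 → Fin 6 → ZMod 3) < #CapSet.cap := by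
    rw [CapSet.finrank_cap_space]
    exact CapSet.pow_lt_card_cap
  obtain ⟨N, hN⟩ :=
    CapSet.exists_forall_pow_le_rAP (by norm_num) CapSet.threeAPFree_cap hcap
  refine ⟨N, fun n hn ↦ ?_⟩
  calc (4.434 : ℝ) ^ n = 2 ^ n * 2.217 ^ n := by rw [← mul_pow]; norm_num
    _ ≤ 2 ^ n * rAP 3 3 n := by gcongr; exact hN n hn
end

section
/- For every k ∈ {4,5,6} there exists N such that for all n ≥ N and every positive integer m divisible by 6, r_k(ℤ_m^n) ≤ (0.952·m)^n. -/
/-!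
Averaging over cosets, an upper bound on the density of a set without a `k`-term progression
passes from a subgroup to the whole group, so it is enough to treat the subgroup
`ℤ_2 ^ n × ℤ_3 ^ d` of `H ^ n` for a suitable `d ≤ n`. If the fibres of `A` over two points of
`ℤ_2 ^ n` share a nontrivial 3-term progression, then `A` contains a 6-term progression, as 2 and 3
are coprime. Otherwise the fibres contain at most `9 ^ d` nontrivial 3-term progressions in total;
deleting a point of each leaves fibres without such progressions, whence
`#A ≤ 2 ^ n * r_3(ℤ_3 ^ d) + 9 ^ d`. The Ellenberg–Gijswijt bound `r_3(ℤ_3 ^ d) ≤ 3 * 2.7552 ^ d`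
makes both terms exponentially small relative to `2 ^ n * 3 ^ d` when `d` is about `7 n / 12`.
-/

open Finset Function Module

section SliceRank

variable {ι F : Type*} [Field F]

lemma exists_mem_finrank_le_ncard_support [Finite ι] (V : Submodule F (ι → F)) :
    ∃ f ∈ V, finrank F V ≤ (support f).ncard := by
  have := Fintype.ofFinite ι
  classical
  obtain ⟨f, hfV, hmax⟩ := exists_maximalFor_of_wellFoundedGT (· ∈ V) support ⟨0, V.zero_mem⟩
  let restrict : V →ₗ[F] (support f → F) := (LinearMap.funLeft F F (↑)).comp V.subtype
  have restrict_injective : Injective restrict := by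
    refine (injective_iff_map_eq_zero restrict).2 fun g hg => ?_
    have g_eq_zero (i : ι) (hi : i ∈ support f) : g.1 i = 0 := congrFun hg ⟨i, hi⟩
    have support_subset_add : support f ⊆ support (f + g.1) := fun i hi => by
      simpa [g_eq_zero i hi] using hi
    have support_add_subset := hmax (V.add_mem hfV g.2) support_subset_add
    ext i
    by_contra hgi
    have hfi : f i = 0 := notMem_support.1 fun hi => hgi (g_eq_zero i hi)
    exact support_add_subset (by simpa [hfi] using hgi) hfi
  refine ⟨f, hfV, ?_⟩
  have := LinearMap.finrank_le_finrank_of_injective restrict_injective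
  rwa [finrank_fintype_fun_eq_card, Fintype.card_eq_nat_card] at this

variable [Fintype ι]

lemma exists_submodule_dotProduct_eq_zero (V : Submodule F (ι → F)) :
    ∃ W : Submodule F (ι → F), (∀ u ∈ W, ∀ v ∈ V, u ⬝ᵥ v = 0) ∧
      finrank F V + finrank F W = Fintype.card ι := by
  classical
  let W := V.dualAnnihilator.comap (dotProductEquiv F ι).toLinearMap
  have hW : finrank F W = finrank F V.dualAnnihilator :=
    ((dotProductEquiv F ι).ofSubmodule' V.dualAnnihilator).finrank_eq
  refine ⟨W, fun u hu v hv => (Submodule.mem_dualAnnihilator _).1 hu v hv, ?_⟩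
  rw [hW, Subspace.finrank_add_finrank_dualAnnihilator_eq, finrank_fintype_fun_eq_card]

variable {J : Type*} {s : Finset J} {p q r : J → ι → F} {V₁ V₂ V₃ : Submodule F (ι → F)}

lemma mul_mem_of_diagonal_eq_sum [DecidableEq ι]
    (hδ : ∀ x y z, ∑ j ∈ s, p j x * q j y * r j z = if x = y ∧ y = z then 1 else 0)
    (hs : ∀ j ∈ s, p j ∈ V₁ ∨ q j ∈ V₂ ∨ r j ∈ V₃) {u f : ι → F}
    (hu : ∀ v ∈ V₁, u ⬝ᵥ v = 0) (hf : ∀ v ∈ V₂, f ⬝ᵥ v = 0) : u * f ∈ V₃ := by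
  have contraction : u * f = ∑ j ∈ s, ((u ⬝ᵥ p j) * (f ⬝ᵥ q j)) • r j := by
    ext z
    calc u z * f z = ∑ x, ∑ y, u x * f y * (if x = y ∧ y = z then 1 else 0) := by
          simp [ite_and]
      _ = ∑ x, ∑ y, ∑ j ∈ s, u x * p j x * (f y * q j y) * r j z := by
          simp only [← hδ, mul_sum]
          refine sum_congr rfl fun x _ => sum_congr rfl fun y _ => sum_congr rfl fun j _ => ?_
          ring
      _ = ∑ j ∈ s, (u ⬝ᵥ p j) * (f ⬝ᵥ q j) * r j z := by
          rw [sum_comm_cycle]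
          simp_rw [dotProduct, sum_mul_sum, sum_mul]
      _ = _ := by simp [Finset.sum_apply]
  rw [contraction]
  refine V₃.sum_mem fun j hj => ?_
  rcases hs j hj with hp | hq | hr
  · simp [hu _ hp]
  · simp [hf _ hq]
  · exact V₃.smul_mem _ hr

/-- **Tao's slice rank lemma**: multiplication by a function `f` orthogonal to `V₂` and of large
support embeds the orthogonal complement of `V₁` in `V₃`, up to the zeros of `f`. -/
theorem card_le_finrank_add_of_diagonal_eq_sum [DecidableEq ι]
    (hδ : ∀ x y z, ∑ j ∈ s, p j x * q j y * r j z = if x = y ∧ y = z then 1 else 0)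
    (hs : ∀ j ∈ s, p j ∈ V₁ ∨ q j ∈ V₂ ∨ r j ∈ V₃) :
    Fintype.card ι ≤ finrank F V₁ + finrank F V₂ + finrank F V₃ := by
  classical
  obtain ⟨U, hU, finrank_U⟩ := exists_submodule_dotProduct_eq_zero V₁
  obtain ⟨W, hW, finrank_W⟩ := exists_submodule_dotProduct_eq_zero V₂
  obtain ⟨f, hfW, card_support⟩ := exists_mem_finrank_le_ncard_support W
  let mulRestrict : U →ₗ[F] V₃ × (((support f)ᶜ : Set ι) → F) :=
    (((LinearMap.mulRight F f).comp U.subtype).codRestrict V₃ fun u =>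
      mul_mem_of_diagonal_eq_sum hδ hs (hU u u.2) (hW f hfW)).prod
    ((LinearMap.funLeft F F (↑)).comp U.subtype)
  have mulRestrict_injective : Injective mulRestrict := by
    refine (injective_iff_map_eq_zero mulRestrict).2 fun u hu => ?_
    obtain ⟨product_eq_zero, restrict_eq_zero⟩ := Prod.ext_iff.1 hu
    ext i
    by_cases hi : i ∈ support f
    · exact (mul_eq_zero.1 (congrFun (congrArg Subtype.val product_eq_zero) i)).resolve_right hi
    · exact congrFun restrict_eq_zero ⟨i, hi⟩
  have finrank_U_le := LinearMap.finrank_le_finrank_of_injective mulRestrict_injective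
  rw [finrank_prod, finrank_fintype_fun_eq_card, Fintype.card_eq_nat_card] at finrank_U_le
  have card_eq := Set.ncard_add_ncard_compl (support f)
  rw [Nat.card_eq_fintype_card] at card_eq
  change _ ≤ _ + (support f)ᶜ.ncard at finrank_U_le
  omega

end SliceRank

section EllenbergGijswijt

variable (F : Type*) [Field F] [Fintype F]

/-- The reduced polynomial whose value at `(x, y, z)` is the indicator of `x + z = y + y`. -/
noncomputable def threeAPPolynomial : MvPolynomial (Fin 3) F :=
  1 - (.X 0 + .X 2 - (.X 1 + .X 1)) ^ (Fintype.card F - 1)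

lemma totalDegree_threeAPPolynomial_le :
    (threeAPPolynomial F).totalDegree ≤ Fintype.card F - 1 := by
  have degree_X (l : Fin 3) : (MvPolynomial.X l : MvPolynomial (Fin 3) F).totalDegree ≤ 1 :=
    (MvPolynomial.totalDegree_X l).le
  have degree_linear : (MvPolynomial.X 0 + MvPolynomial.X 2 -
      (MvPolynomial.X 1 + MvPolynomial.X 1) : MvPolynomial (Fin 3) F).totalDegree ≤ 1 :=
    (MvPolynomial.totalDegree_sub _ _).trans <| max_le
      ((MvPolynomial.totalDegree_add _ _).trans <| max_le (degree_X 0) (degree_X 2))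
      ((MvPolynomial.totalDegree_add _ _).trans <| max_le (degree_X 1) (degree_X 1))
  refine (MvPolynomial.totalDegree_sub _ _).trans (max_le (by simp) ?_)
  exact (MvPolynomial.totalDegree_pow _ _).trans
    (by simpa using Nat.mul_le_mul_left _ degree_linear)

variable {F} [DecidableEq F]

lemma eval_threeAPPolynomial (v : Fin 3 → F) :
    MvPolynomial.eval v (threeAPPolynomial F) = if v 0 + v 2 = v 1 + v 1 then 1 else 0 := by
  have card_sub_one_ne_zero : Fintype.card F - 1 ≠ 0 :=
    Nat.sub_ne_zero_of_lt Fintype.one_lt_card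
  simp only [threeAPPolynomial, map_sub, map_one, map_pow, map_add, MvPolynomial.eval_X]
  split_ifs with h
  · rw [h, sub_self, zero_pow card_sub_one_ne_zero, sub_zero]
  · rw [FiniteField.pow_card_sub_one_eq_one _ (sub_ne_zero.2 h), sub_self]

lemma prod_eval_threeAPPolynomial {ι : Type*} [Fintype ι] (x : Fin 3 → ι → F) :
    ∏ i, MvPolynomial.eval (fun l => x l i) (threeAPPolynomial F) =
      if x 0 + x 2 = x 1 + x 1 then 1 else 0 := by
  simp only [eval_threeAPPolynomial, prod_ite_zero, prod_const_one, mem_univ, true_imp_iff,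
    funext_iff, Pi.add_apply]

variable {ι : Type*} [Fintype ι]

/-- The function on `ι → R` given by the monomial with exponent vector `a`. -/
def monomialFun {R : Type*} [CommSemiring R] (a : ι → ℕ) (x : ι → R) : R :=
  ∏ i, x i ^ a i

variable [DecidableEq ι]

lemma prod_eval_eq_sum_monomialFun {σ R : Type*} [Fintype σ] [CommSemiring R]
    (P : MvPolynomial σ R) (x : σ → ι → R) :
    ∏ i, MvPolynomial.eval (fun l => x l i) P =
      ∑ φ ∈ Fintype.piFinset fun _ => P.support,
        (∏ i, P.coeff (φ i)) * ∏ l, monomialFun (fun i => φ i l) (x l) := by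
  simp only [MvPolynomial.eval_eq', prod_univ_sum, prod_mul_distrib, monomialFun]
  exact sum_congr rfl fun φ _ => congrArg _ prod_comm

/-- Exponent vectors of the monomials in the variables `ι` with degree at most `m` in each variable
and total degree at most a third of the largest possible total degree `m * card ι`. -/
def smallExponents (ι : Type*) [Fintype ι] [DecidableEq ι] (m : ℕ) : Finset (ι → ℕ) :=
  {a ∈ Fintype.piFinset fun _ => range (m + 1) | 3 * ∑ i, a i ≤ m * Fintype.card ι}

lemma card_smallExponents_mul_pow_le (m : ℕ) {t : ℝ} (ht₀ : 0 ≤ t) (ht₁ : t ≤ 1) :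
    #(smallExponents ι m) * t ^ (m * Fintype.card ι) ≤
      (∑ j ∈ range (m + 1), t ^ (3 * j)) ^ Fintype.card ι :=
  calc #(smallExponents ι m) * t ^ (m * Fintype.card ι)
      = ∑ _a ∈ smallExponents ι m, t ^ (m * Fintype.card ι) := by simp
    _ ≤ ∑ a ∈ smallExponents ι m, ∏ i, t ^ (3 * a i) := by
        refine sum_le_sum fun a ha => ?_
        rw [prod_pow_eq_pow_sum, ← mul_sum]
        exact pow_le_pow_of_le_one ht₀ ht₁ (mem_filter.1 ha).2
    _ ≤ ∑ a ∈ Fintype.piFinset fun _ : ι => range (m + 1), ∏ i, t ^ (3 * a i) :=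
        sum_le_sum_of_subset_of_nonneg (filter_subset _ _) fun _ _ _ => by positivity
    _ = (∑ j ∈ range (m + 1), t ^ (3 * j)) ^ Fintype.card ι := by
        rw [← prod_univ_sum (fun _ : ι => range (m + 1)) fun _ j => t ^ (3 * j), prod_const,
          card_univ]

lemma exists_mem_smallExponents_of_totalDegree_le {R : Type*} [CommSemiring R] {m : ℕ}
    {P : MvPolynomial (Fin 3) R} (hP : P.totalDegree ≤ m) {φ : ι → Fin 3 →₀ ℕ}
    (hφ : φ ∈ Fintype.piFinset fun _ => P.support) :
    ∃ l, (fun i => φ i l) ∈ smallExponents ι m := by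
  have degree_le (i : ι) : ∑ l, φ i l ≤ m := by
    rw [← Finsupp.sum_fintype (φ i) (fun _ e => e) fun _ => rfl]
    exact (MvPolynomial.le_totalDegree (Fintype.mem_piFinset.1 hφ i)).trans hP
  obtain ⟨l, -, hl⟩ : ∃ l ∈ univ, 3 * ∑ i, φ i l ≤ m * Fintype.card ι := by
    refine exists_le_of_sum_le univ_nonempty ?_
    calc ∑ l : Fin 3, 3 * ∑ i, φ i l = 3 * ∑ i, ∑ l, φ i l := by rw [← mul_sum, sum_comm]
      _ ≤ 3 * ∑ _i : ι, m := by gcongr with i; exact degree_le i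
      _ = ∑ _l : Fin 3, m * Fintype.card ι := by
          simp only [sum_const, card_univ, Fintype.card_fin, smul_eq_mul]; ring
  refine ⟨l, mem_filter.2 ⟨Fintype.mem_piFinset.2 fun i => mem_range_succ_iff.2 ?_, hl⟩⟩
  exact (single_le_sum (f := φ i) (fun _ _ => Nat.zero_le _) (mem_univ l)).trans (degree_le i)

lemma add_eq_add_self_iff_of_threeAPFree {G : Type*} [AddCommGroup G] {A : Set G}
    (hA : ThreeAPFree A) (x y z : A) : (x + z : G) = y + y ↔ x = y ∧ y = z := by
  refine ⟨fun h => ?_, by rintro ⟨rfl, rfl⟩; rfl⟩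
  have hxy : (x : G) = y := hA x.2 y.2 z.2 h
  rw [hxy, add_right_inj] at h
  exact ⟨Subtype.ext hxy, Subtype.ext h.symm⟩

/-- **Ellenberg–Gijswijt**, by Tao's slice rank argument. -/
theorem addRothNumber_univ_pi_le :
    addRothNumber (univ : Finset (ι → F)) ≤ 3 * #(smallExponents ι (Fintype.card F - 1)) := by
  obtain ⟨A, -, card_A, hA⟩ := addRothNumber_spec (univ : Finset (ι → F))
  let restrict (a : ι → ℕ) (x : A) : F := monomialFun a x.1
  let small := (smallExponents ι (Fintype.card F - 1)).image restrict
  let V : Submodule F (A → F) := .span F small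
  have finrank_V : finrank F V ≤ #(smallExponents ι (Fintype.card F - 1)) :=
    (finrank_span_finset_le_card small).trans card_image_le
  let s : Finset (ι → Fin 3 →₀ ℕ) := Fintype.piFinset fun _ => (threeAPPolynomial F).support
  let c (φ : ι → Fin 3 →₀ ℕ) : F := ∏ i, (threeAPPolynomial F).coeff (φ i)
  let factor (l : Fin 3) (φ : ι → Fin 3 →₀ ℕ) : A → F := restrict fun i => φ i l
  have diagonal (x y z : A) : ∑ φ ∈ s, (c φ • factor 0 φ) x * factor 1 φ y * factor 2 φ z =
      if x = y ∧ y = z then 1 else 0 :=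
    calc _ = ∏ i, MvPolynomial.eval (fun l => ![x.1, y.1, z.1] l i) (threeAPPolynomial F) := by
          simp [prod_eval_eq_sum_monomialFun, s, c, factor, restrict, Fin.prod_univ_three,
            mul_assoc]
      _ = if x.1 + z.1 = y.1 + y.1 then 1 else 0 := prod_eval_threeAPPolynomial _
      _ = _ := if_congr (add_eq_add_self_iff_of_threeAPFree hA x y z) rfl rfl
  have factor_mem : ∀ φ ∈ s, c φ • factor 0 φ ∈ V ∨ factor 1 φ ∈ V ∨ factor 2 φ ∈ V := by
    intro φ hφ
    obtain ⟨l, hl⟩ := exists_mem_smallExponents_of_totalDegree_le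
      (totalDegree_threeAPPolynomial_le F) hφ
    have mem_V : factor l φ ∈ V := Submodule.subset_span (mem_image_of_mem _ hl)
    fin_cases l
    exacts [.inl (V.smul_mem _ mem_V), .inr (.inl mem_V), .inr (.inr mem_V)]
  have := card_le_finrank_add_of_diagonal_eq_sum diagonal factor_mem
  rw [Fintype.card_coe, card_A] at this
  omega

theorem addRothNumber_univ_pi_zmod_three_le :
    addRothNumber (univ : Finset (ι → ZMod 3)) ≤ 3 * (2.7552 : ℝ) ^ Fintype.card ι := by
  -- `x = t ^ 3` with `t = 0.84` nearly minimises `(1 + x + x ^ 2) / x ^ (2 / 3)`.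
  have chernoff := card_smallExponents_mul_pow_le (ι := ι) 2 (t := 0.84) (by norm_num) (by norm_num)
  have base_le : ∑ j ∈ range 3, (0.84 : ℝ) ^ (3 * j) ≤ 2.7552 * 0.84 ^ 2 := by
    norm_num [sum_range_succ]
  have card_le : (#(smallExponents ι 2) : ℝ) ≤ 2.7552 ^ Fintype.card ι := by
    refine le_of_mul_le_mul_right (chernoff.trans ?_) (by positivity)
    rw [pow_mul, ← mul_pow]
    gcongr
  calc (addRothNumber (univ : Finset (ι → ZMod 3)) : ℝ) ≤ 3 * #(smallExponents ι 2) := by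
        exact_mod_cast addRothNumber_univ_pi_le (F := ZMod 3)
    _ ≤ 3 * 2.7552 ^ Fintype.card ι := by gcongr

end EllenbergGijswijt

section Progressions

variable {G E : Type*} [AddCommGroup G] [AddCommGroup E] {k : ℕ}

lemma IsDistinctAP.of_le {l : ℕ} {A : Set G} (hA : IsDistinctAP l A) (h : k ≤ l) :
    IsDistinctAP k A := by
  obtain ⟨a, d, mem, inj⟩ := hA
  exact ⟨a, d, fun i => mem (i.castLE h), inj.comp (Fin.castLE_injective h)⟩

lemma IsDistinctAP.of_preimage_add {φ : E →+ G} (hφ : Injective φ) {g : G} {A : Set G}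
    (hA : IsDistinctAP k ((fun x => g + φ x) ⁻¹' A)) : IsDistinctAP k A := by
  obtain ⟨a, d, mem, inj⟩ := hA
  have map_term (i : Fin k) : g + φ a + (i : ℕ) • φ d = g + φ (a + (i : ℕ) • d) := by
    rw [map_add, map_nsmul, add_assoc]
  refine ⟨g + φ a, φ d, fun i => map_term i ▸ mem i, ?_⟩
  simp only [map_term]
  exact (add_right_injective g).comp (hφ.comp inj)

lemma isDistinctAP_of_coprime_addOrderOf {A : Set G} {a u v : G}
    (huv : (addOrderOf u).Coprime (addOrderOf v))
    (hA : ∀ i < addOrderOf u, ∀ j < addOrderOf v, a + i • u + j • v ∈ A) :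
    IsDistinctAP (addOrderOf u * addOrderOf v) A := by
  have order_add : addOrderOf (u + v) = addOrderOf u * addOrderOf v :=
    (AddCommute.all u v).addOrderOf_add_eq_mul_addOrderOf_of_coprime huv
  refine ⟨a, u + v, fun i => ?_, fun i j hij => Fin.ext ?_⟩
  · have order_pos : 0 < addOrderOf u * addOrderOf v := i.pos
    rw [nsmul_add, ← add_assoc, ← mod_addOrderOf_nsmul u, ← mod_addOrderOf_nsmul v]
    exact hA _ (Nat.mod_lt _ (Nat.pos_of_mul_pos_right order_pos))
      _ (Nat.mod_lt _ (Nat.pos_of_mul_pos_left order_pos))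
  · exact nsmul_injOn_Iio_addOrderOf (by simp [order_add]) (by simp [order_add])
      (add_left_cancel hij)

lemma card_le_mul_natCard_of_injective [Finite E] [Finite G] {φ : E →+ G} (hφ : Injective φ)
    {c : ℝ} (hc : ∀ B : Finset E, ¬ IsDistinctAP k (B : Set E) → #B ≤ c * Nat.card E)
    {A : Finset G} (hA : ¬ IsDistinctAP k (A : Set G)) : #A ≤ c * Nat.card G := by
  classical
  have := Fintype.ofFinite E
  have := Fintype.ofFinite G
  simp only [Nat.card_eq_fintype_card] at hc ⊢
  have fiber_le (g : G) : (#{x | g + φ x ∈ A} : ℝ) ≤ c * Fintype.card E :=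
    hc _ fun h => hA (.of_preimage_add hφ (g := g) (by simpa [Set.preimage] using h))
  have card_translate (x : E) : #{g | g + φ x ∈ A} = #A :=
    card_equiv (Equiv.addRight (φ x)) (by simp)
  have double_count : ∑ g, #{x | g + φ x ∈ A} = Fintype.card E * #A := by
    have := sum_card_bipartiteAbove_eq_sum_card_bipartiteBelow (s := univ) (t := univ)
      fun (g : G) (x : E) => g + φ x ∈ A
    simpa [bipartiteAbove, bipartiteBelow, card_translate] using this
  refine le_of_mul_le_mul_left (a := (Fintype.card E : ℝ)) ?_ (by exact_mod_cast Fintype.card_pos)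
  calc (Fintype.card E : ℝ) * #A = ∑ g, (#{x | g + φ x ∈ A} : ℝ) := by
        exact_mod_cast double_count.symm
    _ ≤ ∑ _g : G, c * Fintype.card E := sum_le_sum fun g _ => fiber_le g
    _ = Fintype.card E * (c * Fintype.card G) := by
        rw [sum_const, card_univ, nsmul_eq_mul]; ring

lemma natCast_rAP_le_of_forall_card_le {m n : ℕ} {c : ℝ} (hc : 0 ≤ c)
    (h : ∀ A : Finset (Fin n → ZMod m), ¬ IsDistinctAP k (A : Set (Fin n → ZMod m)) → #A ≤ c) :
    rAP k m n ≤ c := by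
  rw [← Nat.le_floor_iff hc]
  refine csSup_le' ?_
  rintro _ ⟨A, hA, rfl⟩
  exact Nat.le_floor (h A hA)

end Progressions

section TwoThreeTorsion

/-- The nontrivial three-term progressions in `S`, encoded by their first two terms. -/
def nontrivialThreeAPs {G : Type*} [AddCommGroup G] [DecidableEq G] (S : Finset G) :
    Finset (G × G) :=
  {p ∈ S ×ˢ S | p.1 ≠ p.2 ∧ p.2 + p.2 - p.1 ∈ S}

lemma card_le_addRothNumber_add_card_nontrivialThreeAPs {G : Type*} [AddCommGroup G]
    [DecidableEq G] (S : Finset G) :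
    #S ≤ addRothNumber S + #(nontrivialThreeAPs S) := by
  let firstTerms := (nontrivialThreeAPs S).image Prod.fst
  have threeAPFree_sdiff : ThreeAPFree (↑(S \ firstTerms) : Set G) := by
    intro a ha b hb c hc h
    simp only [coe_sdiff, Set.mem_sdiff, mem_coe] at ha hb hc
    by_contra hab
    refine ha.2 (mem_image_of_mem Prod.fst (a := (a, b)) ?_)
    simp [nontrivialThreeAPs, ha.1, hb.1, hab, ← h, hc.1]
  calc #S ≤ #(S \ firstTerms) + #firstTerms := by
        rw [add_comm, ← tsub_le_iff_left]; exact le_card_sdiff _ _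
    _ ≤ addRothNumber S + #(nontrivialThreeAPs S) :=
        add_le_add (threeAPFree_sdiff.le_addRothNumber sdiff_subset) card_image_le

variable {X Y : Type*} [AddCommGroup X] [AddCommGroup Y]

lemma isDistinctAP_six_of_two_fibers (hX : ∀ x : X, 2 • x = 0) (hY : ∀ y : Y, 3 • y = 0)
    {A : Set (X × Y)} {x x' : X} (hx : x ≠ x') {a b : Y} (hab : a ≠ b)
    (hA : ∀ w ∈ ({x, x'} : Set X), ∀ y ∈ ({a, b, b + b - a} : Set Y), (w, y) ∈ A) :
    IsDistinctAP 6 A := by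
  have order_left : addOrderOf (x' - x, (0 : Y)) = 2 :=
    addOrderOf_eq_prime (by simp [hX]) (by simpa [sub_eq_zero] using hx.symm)
  have order_right : addOrderOf ((0 : X), b - a) = 3 :=
    addOrderOf_eq_prime (by simp [hY]) (by simpa [sub_eq_zero] using hab.symm)
  have progression := isDistinctAP_of_coprime_addOrderOf (A := A) (a := (x, a))
    (u := (x' - x, 0)) (v := (0, b - a)) (by rw [order_left, order_right]; norm_num) ?_
  · rwa [order_left, order_right] at progression
  rw [order_left, order_right]
  intro i hi j hj
  have hw : x + i • (x' - x) ∈ ({x, x'} : Set X) := by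
    interval_cases i <;> simp
  have hy : a + j • (b - a) ∈ ({a, b, b + b - a} : Set Y) := by
    interval_cases j
    · simp
    · simp
    · exact .inr (.inr (by rw [Set.mem_singleton_iff]; abel))
  simpa using hA _ hw _ hy

lemma card_le_of_not_isDistinctAP_six [Fintype X] [Fintype Y] [DecidableEq Y]
    (hX : ∀ x : X, 2 • x = 0) (hY : ∀ y : Y, 3 • y = 0)
    {A : Finset (X × Y)} (hA : ¬ IsDistinctAP 6 (A : Set (X × Y))) :
    #A ≤ Fintype.card X * addRothNumber (univ : Finset Y) + Fintype.card Y ^ 2 := by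
  classical
  let fiber (x : X) : Finset Y := {y | (x, y) ∈ A}
  have sum_card_fiber : #A = ∑ x, #(fiber x) := by
    simp_rw [fiber, card_filter]
    rw [← Fintype.sum_prod_type', sum_boole]
    simp
  have disjoint_threeAPs :
      (Set.univ : Set X).PairwiseDisjoint fun x => nontrivialThreeAPs (fiber x) := by
    intro x _ x' _ hx
    refine disjoint_left.2 fun ⟨a, b⟩ h h' => hA (isDistinctAP_six_of_two_fibers hX hY hx
      (mem_filter.1 h).2.1 (a := a) (b := b) ?_)
    simp only [nontrivialThreeAPs, fiber, mem_filter, mem_product, mem_univ, true_and] at h h'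
    simp [h, h']
  have sum_card_threeAPs : ∑ x, #(nontrivialThreeAPs (fiber x)) ≤ Fintype.card Y ^ 2 := by
    rw [← card_biUnion (by simpa using disjoint_threeAPs)]
    exact (card_le_univ _).trans (by simp [sq])
  calc #A = ∑ x, #(fiber x) := sum_card_fiber
    _ ≤ ∑ x, (addRothNumber (univ : Finset Y) + #(nontrivialThreeAPs (fiber x))) := by
        gcongr with x
        exact (card_le_addRothNumber_add_card_nontrivialThreeAPs _).trans
          (Nat.add_le_add_right (addRothNumber.mono (subset_univ _)) _)
    _ ≤ Fintype.card X * addRothNumber (univ : Finset Y) + Fintype.card Y ^ 2 := by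
        rw [sum_add_distrib, sum_const, card_univ, smul_eq_mul]
        gcongr

end TwoThreeTorsion

section Embedding

lemma exists_injective_zmod_pi {H ι κ : Type*} [AddCommGroup H] [Finite H] (p : ℕ)
    [Fact p.Prime] (hp : p ∣ Nat.card H) (e : ι ↪ κ) :
    ∃ φ : (ι → ZMod p) →+ (κ → H), Injective φ := by
  obtain ⟨h, hh⟩ := exists_prime_addOrderOf_dvd_card' p hp
  let f : ZMod p →+ H := ZMod.lift p ⟨zmultiplesHom H h, by simp [← hh, addOrderOf_nsmul_eq_zero]⟩
  have hf : Injective f := (ZMod.lift_injective p).2 fun i hi => by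
    rwa [ZMod.intCast_zmod_eq_zero_iff_dvd, ← hh, addOrderOf_dvd_iff_zsmul_eq_zero]
  exact ⟨(Function.ExtendByZero.hom H e).comp (f.compLeft ι),
    (extend_injective e.injective _).comp hf.comp_left⟩

lemma injective_coprod_of_coprime {X Y G : Type*} [AddCommGroup X] [AddCommGroup Y]
    [AddCommGroup G] {α : X →+ G} {β : Y →+ G} (hα : Injective α) (hβ : Injective β)
    (hXY : (Nat.card X).Coprime (Nat.card Y)) : Injective (α.coprod β) := by
  refine (injective_iff_map_eq_zero _).2 fun ⟨x, y⟩ h => ?_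
  have hxy : α x = -β y := eq_neg_of_add_eq_zero_left h
  have order_eq : addOrderOf x = addOrderOf y := by
    rw [← addOrderOf_injective α hα, hxy, addOrderOf_neg, addOrderOf_injective β hβ]
  have hx : x = 0 := AddMonoid.addOrderOf_eq_one_iff.1 <|
    Nat.eq_one_of_dvd_coprimes hXY (addOrderOf_dvd_natCard x) (order_eq ▸ addOrderOf_dvd_natCard y)
  have hy : y = 0 := hβ (by simpa [hx] using hxy)
  rw [hx, hy, Prod.mk_zero_zero]

end Embedding

-- `0.5515` bounds both `(2.7552 / 3) ^ 7` and `3 ^ 7 / 2 ^ 12`, and is less than `0.952 ^ 12`.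
lemma exists_forall_four_mul_pow_le :
    ∃ N : ℕ, ∀ n, N ≤ n → (4 : ℝ) * 0.5515 ^ (n / 12) ≤ 0.952 ^ n := by
  have ratio_tendsto := tendsto_pow_atTop_nhds_zero_of_lt_one (r := (0.5515 / 0.952 ^ 12 : ℝ))
    (by norm_num) (by norm_num)
  obtain ⟨N, hN⟩ := Filter.eventually_atTop.1
    (ratio_tendsto.eventually_le_const (show (0 : ℝ) < 0.952 ^ 11 / 4 by norm_num))
  refine ⟨12 * N, fun n hn => ?_⟩
  have ratio_le := hN (n / 12) (by omega)
  rw [div_pow, div_le_div_iff₀ (by positivity) (by norm_num)] at ratio_le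
  calc (4 : ℝ) * 0.5515 ^ (n / 12) ≤ 0.952 ^ 11 * (0.952 ^ 12) ^ (n / 12) := by linarith
    _ = 0.952 ^ (11 + 12 * (n / 12)) := by rw [← pow_mul, ← pow_add]
    _ ≤ 0.952 ^ n := pow_le_pow_of_le_one (by norm_num) (by norm_num) (by omega)

lemma card_le_four_mul_pow_mul_natCard {n : ℕ}
    {A : Finset ((Fin n → ZMod 2) × (Fin (7 * (n / 12)) → ZMod 3))}
    (hA : ¬ IsDistinctAP 6 (A : Set ((Fin n → ZMod 2) × (Fin (7 * (n / 12)) → ZMod 3)))) :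
    (#A : ℝ) ≤ 4 * 0.5515 ^ (n / 12) *
      Nat.card ((Fin n → ZMod 2) × (Fin (7 * (n / 12)) → ZMod 3)) := by
  generalize hq : n / 12 = q at A hA ⊢
  have hX (x : Fin n → ZMod 2) : 2 • x = 0 := ZModModule.char_nsmul_eq_zero 2 x
  have hY (y : Fin (7 * q) → ZMod 3) : 3 • y = 0 := ZModModule.char_nsmul_eq_zero 3 y
  have roth_le : (addRothNumber (univ : Finset (Fin (7 * q) → ZMod 3)) : ℝ) ≤
      3 * (3 ^ (7 * q) * 0.5515 ^ q) := by
    refine addRothNumber_univ_pi_zmod_three_le.trans ?_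
    rw [Fintype.card_fin, pow_mul, pow_mul, ← mul_pow]
    gcongr
    norm_num
  have three_pow_le : (3 : ℝ) ^ (7 * q) ≤ 2 ^ n * 0.5515 ^ q :=
    calc (3 : ℝ) ^ (7 * q) ≤ 2 ^ (12 * q) * 0.5515 ^ q := by
          rw [pow_mul, pow_mul, ← mul_pow]
          gcongr
          norm_num
      _ ≤ 2 ^ n * 0.5515 ^ q := by
          gcongr
          · norm_num
          · omega
  calc (#A : ℝ)
      ≤ 2 ^ n * addRothNumber (univ : Finset (Fin (7 * q) → ZMod 3)) +
          3 ^ (7 * q) * 3 ^ (7 * q) := by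
        have := card_le_of_not_isDistinctAP_six hX hY hA
        simp only [Fintype.card_fun, ZMod.card, Fintype.card_fin, sq] at this
        exact_mod_cast this
    _ ≤ 2 ^ n * (3 * (3 ^ (7 * q) * 0.5515 ^ q)) + 3 ^ (7 * q) * (2 ^ n * 0.5515 ^ q) := by gcongr
    _ = 4 * 0.5515 ^ q * Nat.card ((Fin n → ZMod 2) × (Fin (7 * q) → ZMod 3)) := by
        simp only [Nat.card_eq_fintype_card, Fintype.card_prod, Fintype.card_fun, ZMod.card,
          Fintype.card_fin, Nat.cast_mul, Nat.cast_pow, Nat.cast_ofNat]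
        ring

theorem rk_mult_of_six_general :
    ∃ N : ℕ, ∀ n : ℕ, N ≤ n → ∀ (H : Type*) [AddCommGroup H] [Finite H], 6 ∣ Nat.card H →
      ∀ k ≤ 6, ∀ A : Finset (Fin n → H), ¬ IsDistinctAP k (A : Set (Fin n → H)) →
        (#A : ℝ) ≤ (0.952 * Nat.card H) ^ n := by
  obtain ⟨N, hN⟩ := exists_forall_four_mul_pow_le
  refine ⟨N, fun n hn H _ _ h6 k hk A hA => ?_⟩
  obtain ⟨α, hα⟩ := exists_injective_zmod_pi 2 (dvd_trans (by norm_num) h6)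
    (Embedding.refl (Fin n))
  obtain ⟨β, hβ⟩ := exists_injective_zmod_pi 3 (dvd_trans (by norm_num) h6)
    (Fin.castLEEmb (show 7 * (n / 12) ≤ n by omega))
  have coprime : (Nat.card (Fin n → ZMod 2)).Coprime
      (Nat.card (Fin (7 * (n / 12)) → ZMod 3)) := by
    simpa using Nat.Coprime.pow _ _ (by norm_num)
  calc (#A : ℝ) ≤ 4 * 0.5515 ^ (n / 12) * Nat.card (Fin n → H) :=
        card_le_mul_natCard_of_injective (injective_coprod_of_coprime hα hβ coprime)
          (fun _ => card_le_four_mul_pow_mul_natCard) fun h => hA (h.of_le hk)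
    _ ≤ 0.952 ^ n * Nat.card (Fin n → H) := by gcongr; exact hN n hn
    _ = (0.952 * Nat.card H) ^ n := by simp [Nat.card_fun, mul_pow]

theorem rk_mult_of_six :
    ∀ k ∈ ({4, 5, 6} : Set ℕ), ∃ N : ℕ, ∀ n : ℕ, N ≤ n → ∀ m : ℕ, 0 < m → 6 ∣ m →
      (rAP k m n : ℝ) ≤ (0.952 * m) ^ n := by
  obtain ⟨N, hN⟩ := rk_mult_of_six_general
  refine fun k hk => ⟨N, fun n hn m hm h6 => ?_⟩
  have : NeZero m := ⟨hm.ne'⟩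
  have hk6 : k ≤ 6 := by rcases hk with rfl | rfl | rfl <;> norm_num
  exact natCast_rAP_le_of_forall_card_le (by positivity) fun A hA => by
    simpa using hN n hn (ZMod m) (by simpa using h6) k hk6 A hA
end
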